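/- arXiv:2012.13733 — 7 statements merged into one kernel-verified Lean document; each statement's English description precedes it below -/
import Mathlib

section
/- A bounded real sequence (x_n)_{n≥1} is Cesàro convergent to ℓ if and only if for every real number α > 1 one has lim_{k→∞} (1/(α^{k+1} − α^k)) · Σ_{α^k ≤ i < α^{k+1}} x_i = ℓ, where the sum ranges over positive integers i with α^k ≤ i < α^{k+1}. -/
open Filter

/-!
Write `S n = ∑ 1 ≤ i < n, x i`. The block of `α` with index `k` has sum
`S ⌈α ^ (k + 1)⌉ - S ⌈α ^ k⌉`, so by a geometric Stolz–Cesàro argument its averages converge to `ℓ`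
exactly when `S ⌈α ^ k⌉ / ⌈α ^ k⌉` does. Thus the block averages control the Cesàro means along
`⌈α ^ k⌉` only. A lower bound `-C ≤ x i` with `0 ≤ C` makes `S n + C * n` monotone, and the means
at two consecutive sampling points then enclose those in between up to a factor about `α`; let
`α → 1`.
-/

open Asymptotics Topology

section NormedSpace

variable {E : Type*} [NormedAddCommGroup E]

theorem tendsto_inv_smul_iff_isLittleO {ι 𝕜 : Type*} [NormedField 𝕜] [NormedSpace 𝕜 E]
    {l : Filter ι} {a : ι → 𝕜} {s : ι → E} {c : E} (ha : ∀ᶠ k in l, a k ≠ 0) :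
    Tendsto (fun k ↦ (a k)⁻¹ • s k) l (𝓝 c) ↔ (fun k ↦ s k - a k • c) =o[l] a := by
  rw [tendsto_iff_norm_sub_tendsto_zero, ← isLittleO_norm_norm, isLittleO_iff_tendsto'
    (ha.mono fun k hk h ↦ absurd (norm_eq_zero.1 h) hk)]
  refine tendsto_congr' (ha.mono fun k hk ↦ ?_)
  dsimp only
  rw [div_eq_inv_mul, ← norm_inv, ← norm_smul, smul_sub, inv_smul_smul₀ hk]

theorem tendsto_inv_smul_iff_of_isEquivalent {ι 𝕜 : Type*} [NormedField 𝕜] [NormedSpace 𝕜 E]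
    {l : Filter ι} {a b : ι → 𝕜} (hab : a ~[l] b) (s : ι → E) {c : E} :
    Tendsto (fun k ↦ (a k)⁻¹ • s k) l (𝓝 c) ↔ Tendsto (fun k ↦ (b k)⁻¹ • s k) l (𝓝 c) :=
  (hab.inv.smul IsEquivalent.refl).tendsto_nhds_iff

theorem isLittleO_of_isLittleO_succ_sub {t : ℕ → E} {a : ℕ → ℝ} (ha_mono : Monotone a)
    (ha : Tendsto a atTop atTop)
    (h : (fun k ↦ t (k + 1) - t k) =o[atTop] (fun k ↦ a (k + 1) - a k)) : t =o[atTop] a := by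
  have a_sub_atTop : Tendsto (fun n ↦ a n - a 0) atTop atTop :=
    tendsto_atTop_add_const_right _ _ ha
  have h_sub : (fun n ↦ t n - t 0) =o[atTop] (fun n ↦ a n - a 0) := by
    simpa only [Finset.sum_range_sub] using h.sum_range
      (fun k ↦ sub_nonneg.2 (ha_mono k.le_succ))
      (by simpa only [Finset.sum_range_sub] using a_sub_atTop)
  have a_sub_equiv : (fun n ↦ a n - a 0) ~[atTop] a := by
    simpa only [sub_eq_add_neg] using
      IsEquivalent.refl.add_const_of_norm_tendsto_atTop (tendsto_norm_atTop_atTop.comp ha)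
  have const_isLittleO : (fun _ ↦ t 0) =o[atTop] a :=
    isLittleO_const_left.2 (Or.inr (tendsto_norm_atTop_atTop.comp ha))
  simpa only [sub_add_cancel] using (h_sub.trans_isEquivalent a_sub_equiv).add const_isLittleO

theorem isLittleO_pow_iff_isLittleO_succ_sub {r : ℝ} (hr : 1 < r) {t : ℕ → E} :
    t =o[atTop] (fun k ↦ r ^ k) ↔
      (fun k ↦ t (k + 1) - t k) =o[atTop] (fun k ↦ r ^ (k + 1) - r ^ k) := by
  constructor <;> intro h
  · have gap (k : ℕ) : r ^ (k + 1) - r ^ k = (r - 1) * r ^ k := by ring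
    have h_succ : (fun k ↦ t (k + 1)) =o[atTop] (fun k ↦ r * r ^ k) := by
      simpa only [Function.comp_def, pow_succ'] using h.comp_tendsto (tendsto_add_atTop_nat 1)
    rw [funext gap, isLittleO_const_mul_right_iff (sub_pos.2 hr).ne']
    exact (h_succ.trans_isBigO (isBigO_const_mul_self r _ _)).sub h
  · exact isLittleO_of_isLittleO_succ_sub (pow_right_mono₀ hr.le)
      (tendsto_pow_atTop_atTop_of_one_lt hr) h

variable [NormedSpace ℝ E]

theorem tendsto_inv_pow_smul_iff_tendsto_succ_sub {r : ℝ} (hr : 1 < r) {s : ℕ → E} {c : E} :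
    Tendsto (fun k ↦ (r ^ k)⁻¹ • s k) atTop (𝓝 c) ↔
      Tendsto (fun k ↦ (r ^ (k + 1) - r ^ k)⁻¹ • (s (k + 1) - s k)) atTop (𝓝 c) := by
  have gap_ne (k : ℕ) : r ^ (k + 1) - r ^ k ≠ 0 :=
    (sub_pos.2 (pow_lt_pow_right₀ hr k.lt_succ_self)).ne'
  rw [tendsto_inv_smul_iff_isLittleO (.of_forall fun k ↦ by positivity),
    tendsto_inv_smul_iff_isLittleO (.of_forall gap_ne), isLittleO_pow_iff_isLittleO_succ_sub hr]
  simp only [sub_sub_sub_comm, sub_smul]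

theorem tendsto_inv_smul_ceil_pow_iff_tendsto_succ_sub {r : ℝ} (hr : 1 < r) (u : ℕ → E) {c : E} :
    Tendsto (fun k : ℕ ↦ (⌈r ^ k⌉₊ : ℝ)⁻¹ • u ⌈r ^ k⌉₊) atTop (𝓝 c) ↔
      Tendsto (fun k : ℕ ↦ (r ^ (k + 1) - r ^ k)⁻¹ • (u ⌈r ^ (k + 1)⌉₊ - u ⌈r ^ k⌉₊))
        atTop (𝓝 c) :=
  (tendsto_inv_smul_iff_of_isEquivalent
    (isEquivalent_nat_ceil.comp_tendsto (tendsto_pow_atTop_atTop_of_one_lt hr)) _).trans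
  (tendsto_inv_pow_smul_iff_tendsto_succ_sub hr (s := fun k : ℕ ↦ u ⌈r ^ k⌉₊))

theorem tendsto_block_avg_iff_tendsto_cesaro_ceil_pow {r : ℝ} (hr : 1 < r) (x : ℕ → E) {c : E} :
    Tendsto (fun k : ℕ ↦
        (r ^ (k + 1) - r ^ k)⁻¹ • ∑ i ∈ Finset.Ico ⌈r ^ k⌉₊ ⌈r ^ (k + 1)⌉₊, x i) atTop (𝓝 c) ↔
      Tendsto (fun k : ℕ ↦ (⌈r ^ k⌉₊ : ℝ)⁻¹ • ∑ i ∈ Finset.Ico 1 ⌈r ^ k⌉₊, x i)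
        atTop (𝓝 c) := by
  have block (k : ℕ) : ∑ i ∈ Finset.Ico ⌈r ^ k⌉₊ ⌈r ^ (k + 1)⌉₊, x i =
      ∑ i ∈ Finset.Ico 1 ⌈r ^ (k + 1)⌉₊, x i - ∑ i ∈ Finset.Ico 1 ⌈r ^ k⌉₊, x i :=
    eq_sub_of_add_eq' <| Finset.sum_Ico_consecutive x (Nat.one_le_ceil_iff.2 (by positivity))
      (Nat.ceil_mono (pow_le_pow_right₀ hr.le k.le_succ))
  simp only [block]
  exact (tendsto_inv_smul_ceil_pow_iff_tendsto_succ_sub hr fun n ↦ ∑ i ∈ Finset.Ico 1 n, x i).symm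

theorem tendsto_inv_smul_sum_Icc_iff_sum_Ico (x : ℕ → E) {c : E} :
    Tendsto (fun n : ℕ ↦ (n : ℝ)⁻¹ • ∑ i ∈ Finset.Icc 1 n, x i) atTop (𝓝 c) ↔
      Tendsto (fun n : ℕ ↦ (n : ℝ)⁻¹ • ∑ i ∈ Finset.Ico 1 n, x i) atTop (𝓝 c) := by
  have succ_equiv : (fun n : ℕ ↦ ((n + 1 : ℕ) : ℝ)) ~[atTop] (fun n : ℕ ↦ (n : ℝ)) := by
    simpa only [Nat.cast_succ] using IsEquivalent.refl.add_const_of_norm_tendsto_atTop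
      (tendsto_norm_atTop_atTop.comp tendsto_natCast_atTop_atTop)
  rw [← tendsto_add_atTop_iff_nat (f := fun n : ℕ ↦ (n : ℝ)⁻¹ • ∑ i ∈ Finset.Ico 1 n, x i) 1]
  exact (tendsto_inv_smul_iff_of_isEquivalent succ_equiv _).symm

end NormedSpace

theorem eventually_ceil_pow_succ_le_mul {r a : ℝ} (hr : 1 < r) (hra : r < a) :
    ∀ᶠ n : ℕ in atTop, (⌈r ^ (n + 1)⌉₊ : ℝ) ≤ a * ⌈r ^ n⌉₊ := by
  have h_gap : Tendsto (fun n : ℕ ↦ (a - r) * r ^ n) atTop atTop :=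
    (tendsto_pow_atTop_atTop_of_one_lt hr).const_mul_atTop (sub_pos.2 hra)
  filter_upwards [h_gap.eventually_ge_atTop 1] with n hn
  calc (⌈r ^ (n + 1)⌉₊ : ℝ) ≤ r ^ (n + 1) + 1 := (Nat.ceil_lt_add_one (by positivity)).le
    _ ≤ a * r ^ n := by rw [pow_succ']; linarith
    _ ≤ a * ⌈r ^ n⌉₊ := mul_le_mul_of_nonneg_left (Nat.le_ceil _) (by linarith)

theorem tendsto_div_of_monotone_of_frequently_tendsto_div_ceil_pow {u : ℕ → ℝ} {ℓ : ℝ}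
    (hu : Monotone u)
    (h : ∃ᶠ r : ℝ in 𝓝[>] 1, Tendsto (fun k : ℕ ↦ u ⌈r ^ k⌉₊ / ⌈r ^ k⌉₊) atTop (𝓝 ℓ)) :
    Tendsto (fun n : ℕ ↦ u n / n) atTop (𝓝 ℓ) := by
  refine tendsto_div_of_monotone_of_exists_subseq_tendsto_div u ℓ hu fun a ha ↦ ?_
  obtain ⟨r, hlim, hr, hra⟩ := (h.and_eventually (Ioo_mem_nhdsGT ha)).exists
  exact ⟨fun k : ℕ ↦ ⌈r ^ k⌉₊, eventually_ceil_pow_succ_le_mul hr hra,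
    tendsto_nat_ceil_atTop.comp (tendsto_pow_atTop_atTop_of_one_lt hr), hlim⟩

theorem tendsto_add_mul_div_iff {ι K : Type*} [Field K] [TopologicalSpace K]
    [IsTopologicalAddGroup K] {l : Filter ι} {s a : ι → K} {c C : K}
    (ha : ∀ᶠ k in l, a k ≠ 0) :
    Tendsto (fun k ↦ (s k + C * a k) / a k) l (𝓝 (c + C)) ↔
      Tendsto (fun k ↦ s k / a k) l (𝓝 c) := by
  rw [← tendsto_add_const_iff C (f := fun k ↦ s k / a k)]
  exact tendsto_congr' (ha.mono fun k hk ↦ by field_simp)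

theorem tendsto_div_of_monotone_add_mul_of_frequently_tendsto_div_ceil_pow {u : ℕ → ℝ} {C ℓ : ℝ}
    (hu : Monotone fun n ↦ u n + C * n)
    (h : ∃ᶠ r : ℝ in 𝓝[>] 1, Tendsto (fun k : ℕ ↦ u ⌈r ^ k⌉₊ / ⌈r ^ k⌉₊) atTop (𝓝 ℓ)) :
    Tendsto (fun n : ℕ ↦ u n / n) atTop (𝓝 ℓ) := by
  rw [← tendsto_add_mul_div_iff (C := C)
    (tendsto_natCast_atTop_atTop.eventually_ne_atTop (0 : ℝ))]
  refine tendsto_div_of_monotone_of_frequently_tendsto_div_ceil_pow hu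
    ((h.and_eventually eventually_mem_nhdsWithin).mono fun r ⟨hlim, hr⟩ ↦ ?_)
  have ceil_ne (k : ℕ) : (⌈r ^ k⌉₊ : ℝ) ≠ 0 := by
    have : 0 < r := zero_lt_one.trans hr
    positivity
  exact (tendsto_add_mul_div_iff (.of_forall ceil_ne)).2 hlim

theorem monotone_sum_Ico_add_mul {R : Type*} [CommRing R] [LinearOrder R] [IsStrictOrderedRing R]
    {x : ℕ → R} {C : R} (hC : 0 ≤ C) (hx : ∀ n, 1 ≤ n → -C ≤ x n) :
    Monotone fun n : ℕ ↦ ∑ i ∈ Finset.Ico 1 n, x i + C * n := by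
  refine monotone_nat_of_le_succ fun n ↦ ?_
  rcases n.eq_zero_or_pos with rfl | hn
  · simpa using hC
  · rw [Finset.sum_Ico_succ_top hn, Nat.cast_succ]
    linarith [hx n hn]

theorem cesaro_iff_forall_block_avg_general (x : ℕ → ℝ) (ℓ : ℝ)
    (hbdd : ∃ C : ℝ, ∀ n : ℕ, 1 ≤ n → C ≤ x n) :
    List.TFAE [
      Tendsto (fun n : ℕ ↦ (1 / (n : ℝ)) * ∑ i ∈ Finset.Icc 1 n, x i) atTop (𝓝 ℓ),
      ∀ α : ℝ, 1 < α →
        Tendsto (fun k : ℕ ↦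
            (1 / (α ^ (k + 1) - α ^ k)) * ∑ i ∈ Finset.Ico ⌈α ^ k⌉₊ ⌈α ^ (k + 1)⌉₊, x i)
          atTop (𝓝 ℓ),
      ∃ᶠ α : ℝ in 𝓝[>] 1,
        Tendsto (fun k : ℕ ↦
            (1 / (α ^ (k + 1) - α ^ k)) * ∑ i ∈ Finset.Ico ⌈α ^ k⌉₊ ⌈α ^ (k + 1)⌉₊, x i)
          atTop (𝓝 ℓ)] := by
  simp only [one_div, ← smul_eq_mul, tendsto_inv_smul_sum_Icc_iff_sum_Ico]
  tfae_have 1 → 2 := fun h α hα ↦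
    (tendsto_block_avg_iff_tendsto_cesaro_ceil_pow hα x).2
      (h.comp (tendsto_nat_ceil_atTop.comp (tendsto_pow_atTop_atTop_of_one_lt hα)))
  tfae_have 2 → 3 := fun h ↦ (eventually_nhdsWithin_of_forall (s := Set.Ioi 1) h).frequently
  tfae_have 3 → 1 := fun h ↦ by
    obtain ⟨C, hC⟩ := hbdd
    have h_mono := monotone_sum_Ico_add_mul (abs_nonneg C)
      fun n hn ↦ (neg_abs_le C).trans (hC n hn)
    simp only [smul_eq_mul, ← div_eq_inv_mul]
    refine tendsto_div_of_monotone_add_mul_of_frequently_tendsto_div_ceil_pow h_mono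
      ((h.and_eventually eventually_mem_nhdsWithin).mono fun α ⟨hlim, hα⟩ ↦ ?_)
    simpa only [smul_eq_mul, ← div_eq_inv_mul] using
      (tendsto_block_avg_iff_tendsto_cesaro_ceil_pow hα x).1 hlim
  tfae_finish

/-- A bounded real sequence is Cesàro convergent to `ℓ` iff for every `α > 1` the
block averages over `[α^k, α^(k+1))` converge to `ℓ`. -/
theorem cesaro_iff_forall_block_avg (x : ℕ → ℝ) (ℓ : ℝ)
    (hbdd : ∃ C : ℝ, ∀ n : ℕ, 1 ≤ n → |x n| ≤ C) :
    Tendsto (fun n : ℕ => (1 / (n : ℝ)) * ∑ i ∈ Finset.Icc 1 n, x i) atTop (nhds ℓ) ↔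
      ∀ α : ℝ, 1 < α →
        Tendsto (fun k : ℕ =>
            (1 / (α ^ (k + 1) - α ^ k)) * ∑ i ∈ Finset.Ico ⌈α ^ k⌉₊ ⌈α ^ (k + 1)⌉₊, x i)
          atTop (nhds ℓ) :=
  (cesaro_iff_forall_block_avg_general x ℓ
    (hbdd.imp' (-·) fun _ hC n hn ↦ neg_le_of_abs_le (hC n hn))).out 0 1
end

section
/- Let (x_n)_{n≥1} be a bounded real sequence such that for every real number α > 1 one has lim_{k→∞} (1/(α^{k+1} − α^k)) · Σ_{α^k ≤ i < α^{k+1}} x_i = ℓ, where the sum ranges over positive integers i with α^k ≤ i < α^{k+1}. Then (x_n) is Cesàro convergent to ℓ. -/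
open Filter

/-!
By the Stolz–Cesàro theorem, convergence of the block averages over `[t k, t (k + 1))` gives
convergence of the averages of `x` over `[0, t k)`. For `t k = α ^ k` consecutive cut-off points
have ratio asymptotic to `α`, which may be taken as close to `1` as desired. A constant added to `x`
makes its partial sums monotone, so that the averages at intermediate indices are squeezed between
those at the neighbouring cut-off points, up to a factor tending to `1` with `α`.
-/

open Asymptotics Finset Topology

lemma isLittleO_of_sub_isLittleO_sub {E : Type*} [NormedAddCommGroup E] {d : ℕ → E} {b : ℕ → ℝ}
    (hb : Monotone b) (hb_top : Tendsto b atTop atTop)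
    (h : (fun k ↦ d (k + 1) - d k) =o[atTop] fun k ↦ b (k + 1) - b k) : d =o[atTop] b := by
  have h_norm : Tendsto (norm ∘ b) atTop atTop := tendsto_norm_atTop_atTop.comp hb_top
  have h_sum_top : Tendsto (fun n ↦ ∑ k ∈ range n, (b (k + 1) - b k)) atTop atTop := by
    simp only [sum_range_sub]
    exact tendsto_atTop_add_const_right _ (-b 0) hb_top
  have h_sum : (fun n ↦ d n - d 0) =o[atTop] fun n ↦ b n - b 0 := by
    simpa only [sum_range_sub] using
      h.sum_range (fun k ↦ sub_nonneg.2 (hb k.le_succ)) h_sum_top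
  have h_bigO : (fun n ↦ b n - b 0) =O[atTop] b :=
    (isBigO_refl b _).sub (isLittleO_const_left.2 (.inr h_norm)).isBigO
  simpa only [sub_add_cancel] using
    (h_sum.trans_isBigO h_bigO).add (isLittleO_const_left (c := d 0).2 (.inr h_norm))

section NormedSpace

variable {E : Type*} [NormedAddCommGroup E] [NormedSpace ℝ E]

lemma isLittleO_sub_smul_iff_tendsto_inv_smul {ι : Type*} {f : Filter ι} {a : ι → E} {b : ι → ℝ}
    {ℓ : E} (hb : ∀ᶠ i in f, b i ≠ 0) :
    (fun i ↦ a i - b i • ℓ) =o[f] b ↔ Tendsto (fun i ↦ (b i)⁻¹ • a i) f (𝓝 ℓ) := by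
  rw [← isLittleO_norm_norm, isLittleO_iff_tendsto' (hb.mono fun i hi h ↦ by simp_all),
    tendsto_iff_norm_sub_tendsto_zero (b := ℓ)]
  refine tendsto_congr' (hb.mono fun i hi ↦ ?_)
  calc ‖a i - b i • ℓ‖ / ‖b i‖ = ‖(b i)⁻¹ • (a i - b i • ℓ)‖ := by
        rw [norm_smul, norm_inv, div_eq_inv_mul]
    _ = ‖(b i)⁻¹ • a i - ℓ‖ := by rw [smul_sub, inv_smul_smul₀ hi]

theorem stolz_cesaro {a : ℕ → E} {b : ℕ → ℝ} {ℓ : E} (hb : StrictMono b)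
    (hb_top : Tendsto b atTop atTop)
    (h : Tendsto (fun k ↦ (b (k + 1) - b k)⁻¹ • (a (k + 1) - a k)) atTop (𝓝 ℓ)) :
    Tendsto (fun k ↦ (b k)⁻¹ • a k) atTop (𝓝 ℓ) := by
  have h_gap (k : ℕ) : b (k + 1) - b k ≠ 0 := (sub_pos.2 (hb k.lt_succ_self)).ne'
  rw [← isLittleO_sub_smul_iff_tendsto_inv_smul (.of_forall h_gap)] at h
  rw [← isLittleO_sub_smul_iff_tendsto_inv_smul (hb_top.eventually_ne_atTop 0)]
  refine isLittleO_of_sub_isLittleO_sub hb.monotone hb_top (h.congr_left fun k ↦ ?_)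
  rw [sub_smul, sub_sub_sub_comm]

theorem tendsto_avg_range_ceil_of_block_avg {x : ℕ → E} {ℓ : E} {t : ℕ → ℝ} (ht : StrictMono t)
    (ht_top : Tendsto t atTop atTop)
    (h : Tendsto (fun k ↦ (t (k + 1) - t k)⁻¹ • ∑ i ∈ Ico ⌈t k⌉₊ ⌈t (k + 1)⌉₊, x i)
      atTop (𝓝 ℓ)) :
    Tendsto (fun k ↦ (⌈t k⌉₊ : ℝ)⁻¹ • ∑ i ∈ range ⌈t k⌉₊, x i) atTop (𝓝 ℓ) := by
  have h_avg : Tendsto (fun k ↦ (t k)⁻¹ • ∑ i ∈ range ⌈t k⌉₊, x i) atTop (𝓝 ℓ) :=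
    stolz_cesaro ht ht_top <| h.congr fun k ↦ by
      rw [sum_Ico_eq_sub _ (Nat.ceil_mono (ht k.lt_succ_self).le)]
  have h_ratio : Tendsto (fun k ↦ ((⌈t k⌉₊ : ℝ) / t k)⁻¹) atTop (𝓝 1) := by
    simpa only [inv_one, Function.comp_apply] using
      ((tendsto_nat_ceil_div_atTop (R := ℝ)).comp ht_top).inv₀ one_ne_zero
  have h_prod := h_ratio.smul h_avg
  rw [one_smul] at h_prod
  refine h_prod.congr' ?_
  filter_upwards [ht_top.eventually_ne_atTop 0] with k hk
  rw [smul_smul, inv_div, div_mul_eq_mul_div, mul_inv_cancel₀ hk, one_div]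

theorem tendsto_avg_Icc_of_tendsto_avg_range {x : ℕ → E} {ℓ : E}
    (h : Tendsto (fun n : ℕ ↦ (n : ℝ)⁻¹ • ∑ i ∈ range n, x i) atTop (𝓝 ℓ)) :
    Tendsto (fun n : ℕ ↦ (n : ℝ)⁻¹ • ∑ i ∈ Icc 1 n, x i) atTop (𝓝 ℓ) := by
  have h_ratio : Tendsto (fun n : ℕ ↦ ((n : ℝ) / (n + 1))⁻¹) atTop (𝓝 1) := by
    simpa only [inv_one] using (tendsto_natCast_div_add_atTop (1 : ℝ)).inv₀ one_ne_zero
  have h_first : Tendsto (fun n : ℕ ↦ (n : ℝ)⁻¹ • x 0) atTop (𝓝 0) := by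
    simpa only [zero_smul] using
      (tendsto_inv_atTop_nhds_zero_nat (𝕜 := ℝ)).smul_const (x 0)
  have h_lim := (h_ratio.smul (h.comp (tendsto_add_atTop_nat 1))).sub h_first
  rw [one_smul, sub_zero] at h_lim
  refine h_lim.congr fun n ↦ ?_
  have hn : (n + 1 : ℝ) ≠ 0 := by positivity
  rw [← Ico_add_one_right_eq_Icc, sum_Ico_eq_sub _ (Nat.le_add_left 1 n), sum_range_one, smul_sub,
    Function.comp_apply, smul_smul, Nat.cast_succ, inv_div, div_mul_eq_mul_div, mul_inv_cancel₀ hn,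
    one_div]

end NormedSpace

theorem tendsto_avg_range_of_bddBelow_of_exists_subseq {x : ℕ → ℝ} {ℓ : ℝ}
    (hx : BddBelow (Set.range x))
    (h : ∀ a : ℝ, 1 < a → ∃ c : ℕ → ℕ, (∀ᶠ k in atTop, (c (k + 1) : ℝ) ≤ a * c k) ∧
      Tendsto c atTop atTop ∧ Tendsto (fun k ↦ (∑ i ∈ range (c k), x i) / c k) atTop (𝓝 ℓ)) :
    Tendsto (fun n : ℕ ↦ (∑ i ∈ range n, x i) / n) atTop (𝓝 ℓ) := by
  obtain ⟨m, hm⟩ := hx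
  have h_shift {n : ℕ} (hn : n ≠ 0) :
      (∑ i ∈ range n, (x i - m)) / n = (∑ i ∈ range n, x i) / n - m := by
    rw [sum_sub_distrib, sum_const, card_range, nsmul_eq_mul, sub_div,
      mul_div_cancel_left₀ _ (Nat.cast_ne_zero.2 hn)]
  have h_mono : Monotone fun n ↦ ∑ i ∈ range n, (x i - m) :=
    monotone_nat_of_le_succ fun n ↦ by
      rw [sum_range_succ]
      exact le_add_of_nonneg_right (sub_nonneg.2 (hm ⟨n, rfl⟩))
  have h_lim : Tendsto (fun n : ℕ ↦ (∑ i ∈ range n, (x i - m)) / n) atTop (𝓝 (ℓ - m)) := by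
    refine tendsto_div_of_monotone_of_exists_subseq_tendsto_div _ _ h_mono fun a ha ↦ ?_
    obtain ⟨c, hc_ratio, hc_top, hc_lim⟩ := h a ha
    refine ⟨c, hc_ratio, hc_top, (hc_lim.sub_const m).congr' ?_⟩
    filter_upwards [hc_top.eventually_ne_atTop 0] with k hk using (h_shift hk).symm
  rw [← sub_add_cancel ℓ m]
  refine (h_lim.add_const m).congr' ?_
  filter_upwards [eventually_ne_atTop 0] with n hn
  rw [h_shift hn, sub_add_cancel]

lemma eventually_ceil_pow_succ_le {a b : ℝ} (hb : 1 < b) (hba : b < a) :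
    ∀ᶠ k : ℕ in atTop, (⌈b ^ (k + 1)⌉₊ : ℝ) ≤ a * ⌈b ^ k⌉₊ := by
  filter_upwards [(tendsto_pow_atTop_atTop_of_one_lt hb).eventually_ge_atTop (a - b)⁻¹] with k hk
  have h_one : 1 ≤ (a - b) * b ^ k := (inv_le_iff_one_le_mul₀' (sub_pos.2 hba)).1 hk
  have hb_pos : 0 < b := zero_lt_one.trans hb
  calc (⌈b ^ (k + 1)⌉₊ : ℝ) ≤ b ^ (k + 1) + 1 := (Nat.ceil_lt_add_one (by positivity)).le
    _ ≤ a * b ^ k := by linarith [pow_succ' b k]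
    _ ≤ a * ⌈b ^ k⌉₊ := mul_le_mul_of_nonneg_left (Nat.le_ceil _) (hb_pos.trans hba).le

theorem cesaro_of_forall_block_avg_general (x : ℕ → ℝ) (ℓ : ℝ)
    (hbdd : IsBoundedUnder (· ≥ ·) atTop x)
    (hblock : ∃ᶠ α : ℝ in 𝓝[>] 1,
      Tendsto (fun k : ℕ ↦
          (1 / (α ^ (k + 1) - α ^ k)) * ∑ i ∈ Ico ⌈α ^ k⌉₊ ⌈α ^ (k + 1)⌉₊, x i)
        atTop (𝓝 ℓ)) :
    Tendsto (fun n : ℕ ↦ (1 / (n : ℝ)) * ∑ i ∈ Icc 1 n, x i) atTop (𝓝 ℓ) := by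
  simp only [one_div, ← smul_eq_mul] at hblock ⊢
  refine tendsto_avg_Icc_of_tendsto_avg_range ?_
  simp only [smul_eq_mul, inv_mul_eq_div]
  refine tendsto_avg_range_of_bddBelow_of_exists_subseq hbdd.bddBelow_range fun a ha ↦ ?_
  obtain ⟨α, hα_lim, hα, hαa⟩ := (hblock.and_eventually (Ioo_mem_nhdsGT ha)).exists
  have h_top : Tendsto (fun k : ℕ ↦ α ^ k) atTop atTop := tendsto_pow_atTop_atTop_of_one_lt hα
  refine ⟨fun k ↦ ⌈α ^ k⌉₊, eventually_ceil_pow_succ_le hα hαa,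
    tendsto_nat_ceil_atTop.comp h_top, ?_⟩
  simpa only [smul_eq_mul, inv_mul_eq_div] using
    tendsto_avg_range_ceil_of_block_avg (pow_right_strictMono₀ hα) h_top hα_lim

/-- If a bounded real sequence has block averages over `[α^k, α^(k+1))` converging to `ℓ`
for every `α > 1`, then it is Cesàro convergent to `ℓ`. -/
theorem cesaro_of_forall_block_avg (x : ℕ → ℝ) (ℓ : ℝ)
    (hbdd : ∃ C : ℝ, ∀ n : ℕ, 1 ≤ n → |x n| ≤ C)
    (hblock : ∀ α : ℝ, 1 < α →
      Tendsto (fun k : ℕ =>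
          (1 / (α ^ (k + 1) - α ^ k)) * ∑ i ∈ Finset.Ico ⌈α ^ k⌉₊ ⌈α ^ (k + 1)⌉₊, x i)
        atTop (nhds ℓ)) :
    Tendsto (fun n : ℕ => (1 / (n : ℝ)) * ∑ i ∈ Finset.Icc 1 n, x i) atTop (nhds ℓ) := by
  obtain ⟨C, hC⟩ := hbdd
  have h_ge : ∀ᶠ n in atTop, -C ≤ x n :=
    eventually_atTop.2 ⟨1, fun n hn ↦ neg_le_of_abs_le (hC n hn)⟩
  exact cesaro_of_forall_block_avg_general x ℓ (isBoundedUnder_of_eventually_ge h_ge)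
    (eventually_nhdsWithin_of_forall (s := Set.Ioi 1) hblock).frequently
end

section
/- Let (x_n)_{n≥1} be a bounded real sequence that is Cesàro convergent to ℓ, and let α > 1 be a real number. Then lim_{k→∞} (1/(α^{k+1} − α^k)) · Σ_{α^k ≤ i < α^{k+1}} x_i = ℓ, where the sum ranges over positive integers i with α^k ≤ i < α^{k+1}. -/
/-!
Write `S t` for the sum of `x i` over `1 ≤ i < t`. Cesàro convergence to `ℓ` means that
`S t - t • ℓ = o(t)` as the real number `t` tends to infinity. Subtracting this estimate at the two
endpoints `u < v` of a block, the sum over the block minus `(v - u) • ℓ` is `o(u) + o(v)`, hence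
`o(v - u)` as soon as `v = O(v - u)`. For `u = α ^ k` and `v = α ^ (k + 1)` this last condition
holds with constant `α / (α - 1)`.
-/

open Filter

section

open Asymptotics Finset Topology

theorem tendsto_inv_smul_iff_isLittleO_sub {ι 𝕜 E : Type*} [NormedField 𝕜]
    [NormedAddCommGroup E] [NormedSpace 𝕜 E] {l : Filter ι} {f : ι → E} {g : ι → 𝕜} {c : E}
    (hg : ∀ᶠ i in l, g i ≠ 0) :
    Tendsto (fun i => (g i)⁻¹ • f i) l (𝓝 c) ↔ (fun i => f i - g i • c) =o[l] g := by
  rw [← tendsto_sub_nhds_zero_iff]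
  constructor <;> intro h
  · have hmul : (fun i => g i • ((g i)⁻¹ • f i - c)) =o[l] fun i => g i • (1 : 𝕜) :=
      (isBigO_refl g l).smul_isLittleO ((isLittleO_one_iff 𝕜).2 h)
    refine hmul.congr' ?_ (by simp)
    filter_upwards [hg] with i hi
    rw [smul_sub, smul_inv_smul₀ hi]
  · refine h.tendsto_inv_smul_nhds_zero.congr' ?_
    filter_upwards [hg] with i hi
    rw [smul_sub, inv_smul_smul₀ hi]

theorem isBigO_pow_succ_sub_pow {𝕜 : Type*} [NormedField 𝕜] {α : 𝕜} (hα : α ≠ 1)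
    (l : Filter ℕ) :
    (fun k : ℕ => α ^ (k + 1)) =O[l] fun k => α ^ (k + 1) - α ^ k := by
  have hα' : α - 1 ≠ 0 := sub_ne_zero.2 hα
  have heq : (fun k : ℕ => α ^ (k + 1)) = fun k => α / (α - 1) * (α ^ (k + 1) - α ^ k) := by
    ext k
    field_simp
    ring
  rw [heq]
  exact isBigO_const_mul_self _ _ _

theorem tendsto_natCeil_sub_one_atTop : Tendsto (fun t : ℝ => ⌈t⌉₊ - 1) atTop atTop :=
  (tendsto_sub_atTop_nat 1).comp tendsto_nat_ceil_atTop

theorem isEquivalent_natCeil_sub_one :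
    (fun t : ℝ => ((⌈t⌉₊ - 1 : ℕ) : ℝ)) ~[atTop] fun t => t := by
  refine (isEquivalent_nat_ceil.sub_isLittleO (isLittleO_const_id_atTop 1)).congr_left ?_
  filter_upwards [eventually_gt_atTop 0] with t ht
  simp [Nat.cast_pred (Nat.ceil_pos.2 ht)]

variable {E : Type*} [NormedAddCommGroup E] [NormedSpace ℝ E] {x : ℕ → E} {ℓ : E}

theorem isLittleO_sum_Ico_natCeil_sub_smul
    (hx : Tendsto (fun n : ℕ => (n : ℝ)⁻¹ • ∑ i ∈ Icc 1 n, x i) atTop (𝓝 ℓ)) :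
    (fun t : ℝ => ∑ i ∈ Ico 1 ⌈t⌉₊, x i - t • ℓ) =o[atTop] fun t => t := by
  have hsum : (fun n : ℕ => ∑ i ∈ Icc 1 n, x i - (n : ℝ) • ℓ) =o[atTop] fun n => (n : ℝ) :=
    (tendsto_inv_smul_iff_isLittleO_sub
      ((eventually_ne_atTop 0).mono fun _ => Nat.cast_ne_zero.2)).1 hx
  have hsum_ceil := (hsum.comp_tendsto tendsto_natCeil_sub_one_atTop).trans_isBigO
    isEquivalent_natCeil_sub_one.isBigO
  have hround : (fun t : ℝ => (((⌈t⌉₊ - 1 : ℕ) : ℝ) - t) • ℓ) =o[atTop] fun t => t := by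
    simpa using isEquivalent_natCeil_sub_one.isLittleO.smul_isBigO
      (isBigO_const_const ℓ (one_ne_zero' ℝ) atTop)
  refine (hsum_ceil.add hround).congr' ?_ .rfl
  filter_upwards [eventually_gt_atTop 0] with t ht
  have hIcc : Icc 1 (⌈t⌉₊ - 1) = Ico 1 ⌈t⌉₊ := by
    rw [← Ico_add_one_right_eq_Icc, Nat.sub_one_add_one (Nat.ceil_pos.2 ht).ne']
  rw [Function.comp_apply, hIcc, sub_smul, sub_add_sub_cancel]

theorem tendsto_inv_smul_sum_Ico_natCeil {ι : Type*} {l : Filter ι} {u v : ι → ℝ}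
    (hx : Tendsto (fun n : ℕ => (n : ℝ)⁻¹ • ∑ i ∈ Icc 1 n, x i) atTop (𝓝 ℓ))
    (hu : Tendsto u l atTop) (huv : ∀ᶠ i in l, u i < v i) (hv : v =O[l] (v - u)) :
    Tendsto (fun i => (v i - u i)⁻¹ • ∑ j ∈ Ico ⌈u i⌉₊ ⌈v i⌉₊, x j) l (𝓝 ℓ) := by
  have hv_top : Tendsto v l atTop := tendsto_atTop_mono' l (huv.mono fun _ => le_of_lt) hu
  have hu_bigO : u =O[l] (v - u) := by
    simpa using hv.sub (isBigO_refl (v - u) l)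
  have hS := isLittleO_sum_Ico_natCeil_sub_smul hx
  have hdiff := ((hS.comp_tendsto hv_top).trans_isBigO hv).sub
    ((hS.comp_tendsto hu).trans_isBigO hu_bigO)
  refine (tendsto_inv_smul_iff_isLittleO_sub (huv.mono fun _ h => (sub_pos.2 h).ne')).2
    (hdiff.congr' ?_ .rfl)
  filter_upwards [huv, hu.eventually_gt_atTop 0] with i huvi hui
  have hblock : ∑ j ∈ Ico 1 ⌈u i⌉₊, x j + ∑ j ∈ Ico ⌈u i⌉₊ ⌈v i⌉₊, x j =
      ∑ j ∈ Ico 1 ⌈v i⌉₊, x j :=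
    sum_Ico_consecutive x (Nat.ceil_pos.2 hui) (Nat.ceil_mono huvi.le)
  simp only [Function.comp_apply, ← hblock, sub_smul]
  abel

theorem block_avg_of_cesaro_general
    (hx : Tendsto (fun n : ℕ => (n : ℝ)⁻¹ • ∑ i ∈ Icc 1 n, x i) atTop (𝓝 ℓ))
    {α : ℝ} (hα : 1 < α) :
    Tendsto (fun k : ℕ =>
        (α ^ (k + 1) - α ^ k)⁻¹ • ∑ i ∈ Ico ⌈α ^ k⌉₊ ⌈α ^ (k + 1)⌉₊, x i)
      atTop (𝓝 ℓ) :=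
  tendsto_inv_smul_sum_Ico_natCeil hx (tendsto_pow_atTop_atTop_of_one_lt hα)
    (.of_forall fun k => pow_lt_pow_right₀ hα k.lt_succ_self) (isBigO_pow_succ_sub_pow hα.ne' _)

end

/-- If a bounded real sequence is Cesàro convergent to `ℓ`, then for any fixed `α > 1` the
block averages over `[α^k, α^(k+1))` converge to `ℓ`. -/
theorem block_avg_of_cesaro (x : ℕ → ℝ) (ℓ : ℝ)
    (hbdd : ∃ C : ℝ, ∀ n : ℕ, 1 ≤ n → |x n| ≤ C)
    (hcesaro : Tendsto (fun n : ℕ => (1 / (n : ℝ)) * ∑ i ∈ Finset.Icc 1 n, x i) atTop (nhds ℓ))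
    (α : ℝ) (hα : 1 < α) :
    Tendsto (fun k : ℕ =>
        (1 / (α ^ (k + 1) - α ^ k)) * ∑ i ∈ Finset.Ico ⌈α ^ k⌉₊ ⌈α ^ (k + 1)⌉₊, x i)
      atTop (nhds ℓ) := by
  simp only [one_div, ← smul_eq_mul] at hcesaro ⊢
  exact block_avg_of_cesaro_general hcesaro hα
end

section
/- A bounded nonnegative real sequence (x_n)_{n≥1} is Cesàro convergent to 0 if and only if there exists some real number α > 1 such that lim_{k→∞} (1/(α^{k+1} − α^k)) · Σ_{α^k ≤ i < α^{k+1}} x_i = 0, where the sum ranges over positive integers i with α^k ≤ i < α^{k+1}. -/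
open Filter

/-!
Write `S n` for the sum of the `x i` over `1 ≤ i < n`. Cesàro convergence to `0` says `S n = o(n)`,
and the block condition says that the increments of `k ↦ S ⌈α ^ k⌉` are `o(α ^ k)`. Summing against
a geometric series, the latter means `S ⌈α ^ k⌉ = o(α ^ k)`. As `S` is monotone, its values along
`⌈α ^ k⌉` control all the others: every `n ≥ 1` lies below some `α ^ k ≤ α * n`.
-/

open Asymptotics

section GeometricScale

variable {α : ℝ}

lemma isLittleO_pow_iff_sub_isLittleO_pow {E : Type*} [NormedAddCommGroup E] (hα : 1 < α)
    {u : ℕ → E} :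
    u =o[atTop] (fun k => α ^ k) ↔ (fun k => u (k + 1) - u k) =o[atTop] (fun k => α ^ k) := by
  have hpow : Tendsto (fun k : ℕ => α ^ k) atTop atTop := tendsto_pow_atTop_atTop_of_one_lt hα
  constructor
  · intro hu
    have hshift : (fun k => u (k + 1)) =o[atTop] (fun k => α * α ^ k) := by
      simpa only [Function.comp_def, pow_succ'] using hu.comp_tendsto (tendsto_add_atTop_nat 1)
    exact (hshift.trans_isBigO (isBigO_const_mul_self α _ _)).sub hu
  · intro hincr
    have hpow_nonneg (k : ℕ) : 0 ≤ α ^ k := pow_nonneg (zero_le_one.trans hα.le) k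
    have hgeom (n : ℕ) : (α - 1) * ∑ k ∈ Finset.range n, α ^ k = α ^ n - 1 := mul_geom_sum α n
    have hgeom_atTop : Tendsto (fun n => ∑ k ∈ Finset.range n, α ^ k) atTop atTop := by
      refine (tendsto_const_mul_atTop_of_pos (sub_pos.2 hα)).1 ?_
      simpa only [hgeom, ← sub_eq_add_neg] using tendsto_atTop_add_const_right atTop (-1) hpow
    have hgeom_isBigO : (fun n => ∑ k ∈ Finset.range n, α ^ k) =O[atTop] (fun n => α ^ n) := by
      refine (isBigO_const_mul_left_iff (sub_pos.2 hα).ne').1 ?_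
      simp only [hgeom]
      exact (isBigO_refl _ _).sub ((isLittleO_const_id_atTop 1).comp_tendsto hpow).isBigO
    have hdiff : (fun n => u n - u 0) =o[atTop] (fun n => α ^ n) := by
      simpa only [Finset.sum_range_sub] using
        (hincr.sum_range hpow_nonneg hgeom_atTop).trans_isBigO hgeom_isBigO
    have hconst : (fun _ => u 0) =o[atTop] (fun n : ℕ => α ^ n) :=
      (isLittleO_const_id_atTop (u 0)).comp_tendsto hpow
    simpa only [sub_add_cancel] using hdiff.add hconst

lemma exists_tendsto_atTop_le_pow_le_mul (hα : 1 < α) :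
    ∃ m : ℝ → ℕ, Tendsto m atTop atTop ∧ ∀ t : ℝ, 1 ≤ t → t ≤ α ^ m t ∧ α ^ m t ≤ α * t := by
  have hα0 : 0 < α := zero_lt_one.trans hα
  refine ⟨fun t => ⌈Real.logb α t⌉₊, tendsto_nat_ceil_atTop.comp (Real.tendsto_logb_atTop hα),
    fun t ht => ?_⟩
  have hlog : 0 ≤ Real.logb α t := Real.logb_nonneg hα ht
  have hrpow : α ^ Real.logb α t = t := Real.rpow_logb hα0 hα.ne' (zero_lt_one.trans_le ht)
  rw [← Real.rpow_natCast]
  constructor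
  · calc t = α ^ Real.logb α t := hrpow.symm
      _ ≤ α ^ (⌈Real.logb α t⌉₊ : ℝ) := Real.rpow_le_rpow_of_exponent_le hα.le (Nat.le_ceil _)
  · calc α ^ (⌈Real.logb α t⌉₊ : ℝ) ≤ α ^ (Real.logb α t + 1) :=
          Real.rpow_le_rpow_of_exponent_le hα.le (Nat.ceil_lt_add_one hlog).le
      _ = α * t := by rw [Real.rpow_add_one hα0.ne', hrpow, mul_comm]

lemma isLittleO_natCast_iff_comp_natCeil_pow_of_monotone {S : ℕ → ℝ} (hS : Monotone S)
    (hα : 1 < α) :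
    S =o[atTop] (fun n => (n : ℝ)) ↔
      (fun k : ℕ => S ⌈α ^ k⌉₊) =o[atTop] (fun k => α ^ k) := by
  constructor
  · intro h
    have hpow := tendsto_pow_atTop_atTop_of_one_lt hα
    exact (h.comp_tendsto (tendsto_nat_ceil_atTop.comp hpow)).trans_isBigO
      (isEquivalent_nat_ceil.isBigO.comp_tendsto hpow)
  · intro h
    obtain ⟨m, hm, hpow⟩ := exists_tendsto_atTop_le_pow_le_mul hα
    have hpow_isBigO : (fun n : ℕ => α ^ m n) =O[atTop] (fun n => (n : ℝ)) := by
      refine IsBigO.of_bound α ((eventually_ge_atTop 1).mono fun n hn => ?_)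
      rw [Real.norm_natCast, Real.norm_of_nonneg (by positivity)]
      exact (hpow n (mod_cast hn)).2
    have hupper : (fun n : ℕ => S ⌈α ^ m n⌉₊) =o[atTop] (fun n => (n : ℝ)) :=
      (h.comp_tendsto (hm.comp tendsto_natCast_atTop_atTop)).trans_isBigO hpow_isBigO
    have hlower : (fun _ => S 0) =o[atTop] (fun n : ℕ => (n : ℝ)) :=
      (isLittleO_const_id_atTop _).comp_tendsto tendsto_natCast_atTop_atTop
    refine IsBigO.trans_isLittleO ?_ (hlower.norm_left.add hupper.norm_left)
    refine IsBigO.of_bound' ((eventually_ge_atTop 1).mono fun n hn => ?_)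
    have hle : S n ≤ S ⌈α ^ m n⌉₊ :=
      hS (Nat.cast_le.1 ((hpow n (mod_cast hn)).1.trans (Nat.le_ceil _)))
    calc ‖S n‖ ≤ max ‖S 0‖ ‖S ⌈α ^ m n⌉₊‖ := abs_le_max_abs_abs (hS n.zero_le) hle
      _ ≤ ‖S 0‖ + ‖S ⌈α ^ m n⌉₊‖ := max_le_add_of_nonneg (norm_nonneg _) (norm_nonneg _)
      _ ≤ _ := Real.le_norm_self _

end GeometricScale

section PartialSums

variable {x : ℕ → ℝ}

lemma monotone_sum_Ico_one (hnonneg : ∀ n : ℕ, 1 ≤ n → 0 ≤ x n) :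
    Monotone fun n => ∑ i ∈ Finset.Ico 1 n, x i := fun _ _ hab =>
  Finset.sum_le_sum_of_subset_of_nonneg (Finset.Ico_subset_Ico_right hab)
    fun i hi _ => hnonneg i (Finset.mem_Ico.1 hi).1

lemma cesaro_tendsto_zero_iff_isLittleO :
    Tendsto (fun n : ℕ => (1 / (n : ℝ)) * ∑ i ∈ Finset.Icc 1 n, x i) atTop (nhds 0) ↔
      (fun n => ∑ i ∈ Finset.Ico 1 n, x i) =o[atTop] (fun n => (n : ℝ)) := by
  have hsucc : (fun n : ℕ => ((n + 1 : ℕ) : ℝ)) =Θ[atTop] (fun n : ℕ => (n : ℝ)) := by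
    have hone : (fun _ => (1 : ℝ)) =o[atTop] (fun n : ℕ => (n : ℝ)) :=
      (isLittleO_const_id_atTop _).comp_tendsto tendsto_natCast_atTop_atTop
    simpa only [Nat.cast_succ, Pi.add_def] using (isTheta_refl _ _).add_isLittleO hone
  have hne : ∀ᶠ n : ℕ in atTop, (n : ℝ) = 0 → ∑ i ∈ Finset.Icc 1 n, x i = 0 :=
    (eventually_ne_atTop 0).mono fun n hn h => absurd (Nat.cast_eq_zero.1 h) hn
  have hshift : (fun n => ∑ i ∈ Finset.Ico 1 n, x i) =o[atTop] (fun n => (n : ℝ)) ↔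
      (fun n => ∑ i ∈ Finset.Icc 1 n, x i) =o[atTop] (fun n => ((n + 1 : ℕ) : ℝ)) := by
    rw [← map_add_atTop_eq_nat 1, isLittleO_map, map_add_atTop_eq_nat]
    simp only [Function.comp_def, Finset.Ico_add_one_right_eq_Icc]
  simp only [one_div_mul_eq_div]
  rw [← isLittleO_iff_tendsto' hne, hshift, hsucc.isLittleO_congr_right]

lemma block_avg_tendsto_zero_iff_isLittleO {α : ℝ} (hα : 1 < α) :
    Tendsto (fun k : ℕ =>
        (1 / (α ^ (k + 1) - α ^ k)) * ∑ i ∈ Finset.Ico ⌈α ^ k⌉₊ ⌈α ^ (k + 1)⌉₊, x i)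
      atTop (nhds 0) ↔
      (fun k => ∑ i ∈ Finset.Ico 1 ⌈α ^ (k + 1)⌉₊, x i - ∑ i ∈ Finset.Ico 1 ⌈α ^ k⌉₊, x i)
        =o[atTop] (fun k => α ^ k) := by
  have hpow (k : ℕ) : 0 < α ^ k := pow_pos (zero_lt_one.trans hα) k
  have hlength (k : ℕ) : α ^ (k + 1) - α ^ k = (α - 1) * α ^ k := by ring
  have hblock (k : ℕ) : ∑ i ∈ Finset.Ico ⌈α ^ k⌉₊ ⌈α ^ (k + 1)⌉₊, x i =
      ∑ i ∈ Finset.Ico 1 ⌈α ^ (k + 1)⌉₊, x i - ∑ i ∈ Finset.Ico 1 ⌈α ^ k⌉₊, x i :=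
    eq_sub_of_add_eq' <| Finset.sum_Ico_consecutive x (Nat.one_le_ceil_iff.2 (hpow k))
      (Nat.ceil_le_ceil (pow_le_pow_right₀ hα.le k.le_succ))
  have hlength_ne (k : ℕ) : (α - 1) * α ^ k ≠ 0 := (mul_pos (sub_pos.2 hα) (hpow k)).ne'
  simp only [hlength, hblock, one_div_mul_eq_div]
  rw [← isLittleO_iff_tendsto fun k hk => absurd hk (hlength_ne k),
    isLittleO_const_mul_right_iff (sub_pos.2 hα).ne']

end PartialSums

theorem nonneg_cesaro_iff_exists_block_avg_general {x : ℕ → ℝ}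
    (hnonneg : ∀ n : ℕ, 1 ≤ n → 0 ≤ x n) {α : ℝ} (hα : 1 < α) :
    Tendsto (fun n : ℕ => (1 / (n : ℝ)) * ∑ i ∈ Finset.Icc 1 n, x i) atTop (nhds 0) ↔
      Tendsto (fun k : ℕ =>
          (1 / (α ^ (k + 1) - α ^ k)) * ∑ i ∈ Finset.Ico ⌈α ^ k⌉₊ ⌈α ^ (k + 1)⌉₊, x i)
        atTop (nhds 0) := by
  rw [cesaro_tendsto_zero_iff_isLittleO, block_avg_tendsto_zero_iff_isLittleO hα,
    isLittleO_natCast_iff_comp_natCeil_pow_of_monotone (monotone_sum_Ico_one hnonneg) hα,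
    isLittleO_pow_iff_sub_isLittleO_pow hα]

/-- A bounded nonnegative real sequence is Cesàro convergent to `0` iff for some `α > 1` the
block averages over `[α^k, α^(k+1))` converge to `0`. -/
theorem nonneg_cesaro_iff_exists_block_avg (x : ℕ → ℝ)
    (hbdd : ∃ C : ℝ, ∀ n : ℕ, 1 ≤ n → |x n| ≤ C)
    (hnonneg : ∀ n : ℕ, 1 ≤ n → 0 ≤ x n) :
    Tendsto (fun n : ℕ => (1 / (n : ℝ)) * ∑ i ∈ Finset.Icc 1 n, x i) atTop (nhds 0) ↔
      ∃ α : ℝ, 1 < α ∧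
        Tendsto (fun k : ℕ =>
            (1 / (α ^ (k + 1) - α ^ k)) * ∑ i ∈ Finset.Ico ⌈α ^ k⌉₊ ⌈α ^ (k + 1)⌉₊, x i)
          atTop (nhds 0) :=
  ⟨fun h => ⟨2, one_lt_two, (nonneg_cesaro_iff_exists_block_avg_general hnonneg one_lt_two).1 h⟩,
    fun ⟨_, hα, h⟩ => (nonneg_cesaro_iff_exists_block_avg_general hnonneg hα).2 h⟩
end

section
/- Let ℓ ∈ ℝ and let (x_n)_{n≥1} be a bounded real sequence with x_n ≥ ℓ for all n ≥ 1. Then (x_n) is Cesàro convergent to ℓ if and only if there exists some real number α > 1 such that lim_{k→∞} (1/(α^{k+1} − α^k)) · Σ_{α^k ≤ i < α^{k+1}} x_i = ℓ, where the sum ranges over positive integers i with α^k ≤ i < α^{k+1}. -/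
open Filter

/-!
Write `S n = ∑ i ∈ Icc 1 n, x i` and let `m k = ⌈α ^ k⌉₊ - 1` be the largest integer below `α ^ k`,
so that the `k`-th block sum is `S (m (k + 1)) - S (m k)`. Since `m k ∼ α ^ k`, convergence of
`S n / n` passes to `S (m k) / α ^ k`, and linearity gives the block averages. Conversely,
Stolz–Cesàro recovers the limit of `S (m k) / α ^ k` from the block averages; after subtracting `ℓ`
from every term the partial sums are monotone and this limit is `0`, so losing a factor `α` when
interpolating between consecutive powers of `α` is harmless.
-/

section NormedSpace

variable {E : Type*} [NormedAddCommGroup E] [NormedSpace ℝ E] {ℓ : E}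

theorem tendsto_inv_smul_of_tendsto_inv_smul_sub {a : ℕ → E} {b : ℕ → ℝ} (hb : StrictMono b)
    (hb_top : Tendsto b atTop atTop)
    (h : Tendsto (fun n => (b (n + 1) - b n)⁻¹ • (a (n + 1) - a n)) atTop (nhds ℓ)) :
    Tendsto (fun n => (b n)⁻¹ • a n) atTop (nhds ℓ) := by
  have hb_sub (n : ℕ) : 0 < b (n + 1) - b n := sub_pos.2 (hb n.lt_succ_self)
  have increment_isLittleO : (fun n => (a (n + 1) - b (n + 1) • ℓ) - (a n - b n • ℓ))
      =o[atTop] fun n => b (n + 1) - b n := by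
    refine ((Asymptotics.isBigO_refl (fun n => b (n + 1) - b n) atTop).smul_isLittleO
      ((Asymptotics.isLittleO_one_iff ℝ).2 (tendsto_sub_nhds_zero_iff.2 h))).congr
      (fun n => ?_) fun n => mul_one _
    rw [smul_sub, smul_inv_smul₀ (hb_sub n).ne', sub_smul]
    abel
  have sub_top : Tendsto (fun n => b n - b 0) atTop atTop :=
    tendsto_atTop_add_const_right _ (-b 0) hb_top
  have sum_isLittleO := increment_isLittleO.sum_range (fun n => (hb_sub n).le) (by
    simpa only [Finset.sum_range_sub] using sub_top)
  simp only [Finset.sum_range_sub, Finset.sum_range_sub (fun n => a n - b n • ℓ)] at sum_isLittleO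
  have norm_b_top : Tendsto (norm ∘ b) atTop atTop := tendsto_norm_atTop_atTop.comp hb_top
  have sub_isBigO : (fun n => b n - b 0) =O[atTop] b :=
    (Asymptotics.isBigO_refl b atTop).sub
      (Asymptotics.isLittleO_const_left.2 (.inr norm_b_top)).isBigO
  have error_isLittleO : (fun n => a n - b n • ℓ) =o[atTop] b := by
    simpa only [sub_add_cancel] using (sum_isLittleO.trans_isBigO sub_isBigO).add
      (Asymptotics.isLittleO_const_left.2 (.inr norm_b_top) : (fun _ => a 0 - b 0 • ℓ) =o[atTop] b)
  refine tendsto_sub_nhds_zero_iff.1 (error_isLittleO.tendsto_inv_smul_nhds_zero.congr' ?_)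
  filter_upwards [hb_top.eventually_gt_atTop 0] with n hn
  rw [smul_sub, inv_smul_smul₀ hn.ne']

theorem tendsto_inv_smul_sub_pow_iff {a : ℕ → E} {α : ℝ} (hα : 1 < α) :
    Tendsto (fun k => (α ^ (k + 1) - α ^ k)⁻¹ • (a (k + 1) - a k)) atTop (nhds ℓ) ↔
      Tendsto (fun k => (α ^ k)⁻¹ • a k) atTop (nhds ℓ) := by
  refine ⟨tendsto_inv_smul_of_tendsto_inv_smul_sub (pow_right_strictMono₀ hα)
    (tendsto_pow_atTop_atTop_of_one_lt hα), fun h => ?_⟩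
  have hα_sub : α - 1 ≠ 0 := (sub_pos.2 hα).ne'
  have hα_ne : α ≠ 0 := (zero_lt_one.trans hα).ne'
  have h_comb := (((tendsto_add_atTop_iff_nat 1).2 h).const_smul (α / (α - 1))).sub
    (h.const_smul (α - 1)⁻¹)
  have h_lim : (α / (α - 1)) • ℓ - (α - 1)⁻¹ • ℓ = ℓ := by
    rw [← sub_smul, div_eq_mul_inv, ← sub_one_mul, mul_inv_cancel₀ hα_sub, one_smul]
  rw [h_lim] at h_comb
  refine h_comb.congr fun k => ?_
  have h_denom : α ^ (k + 1) - α ^ k = (α - 1) * α ^ k := by ring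
  rw [smul_smul, smul_smul, smul_sub, h_denom, pow_succ]
  congr 2 <;> field_simp

theorem tendsto_inv_smul_comp_of_tendsto_div {ι : Type*} {l : Filter ι} {a : ℕ → E} {m : ι → ℕ}
    {r : ι → ℝ} (hm : Tendsto m l atTop) (hmr : Tendsto (fun i => (m i : ℝ) / r i) l (nhds 1))
    (h : Tendsto (fun n : ℕ => (n : ℝ)⁻¹ • a n) atTop (nhds ℓ)) :
    Tendsto (fun i => (r i)⁻¹ • a (m i)) l (nhds ℓ) := by
  have h_prod := hmr.smul (h.comp hm)
  rw [one_smul] at h_prod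
  refine h_prod.congr' ?_
  filter_upwards [hm.eventually_ne_atTop 0] with i hi
  have hi' : (m i : ℝ) ≠ 0 := Nat.cast_ne_zero.2 hi
  rw [Function.comp_apply, smul_smul]
  congr 1
  field_simp

theorem tendsto_inv_smul_sum_sub_iff {ι : Type*} {l : Filter ι} {x : ℕ → E} {m : ι → ℕ} {r : ι → ℝ}
    (hmr : Tendsto (fun i => (m i : ℝ) / r i) l (nhds 1)) :
    Tendsto (fun i => (r i)⁻¹ • ∑ j ∈ Finset.Icc 1 (m i), (x j - ℓ)) l (nhds 0) ↔
      Tendsto (fun i => (r i)⁻¹ • ∑ j ∈ Finset.Icc 1 (m i), x j) l (nhds ℓ) := by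
  have h_const : Tendsto (fun i => ((m i : ℝ) / r i) • ℓ) l (nhds ℓ) := by
    simpa only [one_smul] using hmr.smul_const ℓ
  have h_sub (i : ι) : (r i)⁻¹ • ∑ j ∈ Finset.Icc 1 (m i), (x j - ℓ) =
      (r i)⁻¹ • ∑ j ∈ Finset.Icc 1 (m i), x j - ((m i : ℝ) / r i) • ℓ := by
    rw [Finset.sum_sub_distrib, Finset.sum_const, Nat.card_Icc, Nat.add_sub_cancel, smul_sub,
      ← Nat.cast_smul_eq_nsmul ℝ, smul_smul, inv_mul_eq_div]
  simp only [h_sub]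
  exact ⟨fun h => by simpa only [sub_add_cancel, zero_add] using h.add h_const,
    fun h => by simpa only [sub_self] using h.sub h_const⟩

end NormedSpace

theorem sum_Ico_eq_sum_Icc_one_sub {G : Type*} [AddCommGroup G] (x : ℕ → G) {a b : ℕ} (ha : 1 ≤ a)
    (hab : a ≤ b) :
    ∑ i ∈ Finset.Ico a b, x i =
      ∑ i ∈ Finset.Icc 1 (b - 1), x i - ∑ i ∈ Finset.Icc 1 (a - 1), x i := by
  have Icc_eq_Ico {n : ℕ} (hn : 1 ≤ n) : Finset.Icc 1 (n - 1) = Finset.Ico 1 n := by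
    rw [← Finset.Ico_add_one_right_eq_Icc, Nat.sub_add_cancel hn]
  rw [Icc_eq_Ico ha, Icc_eq_Ico (ha.trans hab), eq_sub_iff_add_eq',
    Finset.sum_Ico_consecutive x ha hab]

section Powers

variable {α : ℝ}

theorem one_le_ceil_pow (hα : 0 < α) (k : ℕ) : 1 ≤ ⌈α ^ k⌉₊ :=
  Nat.one_le_ceil_iff.2 (pow_pos hα k)

theorem tendsto_ceil_pow_sub_one_atTop (hα : 1 < α) :
    Tendsto (fun k : ℕ => ⌈α ^ k⌉₊ - 1) atTop atTop :=
  (tendsto_sub_atTop_nat 1).comp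
    (tendsto_nat_ceil_atTop.comp (tendsto_pow_atTop_atTop_of_one_lt hα))

theorem tendsto_ceil_pow_sub_one_div_pow (hα : 1 < α) :
    Tendsto (fun k : ℕ => ((⌈α ^ k⌉₊ - 1 : ℕ) : ℝ) / α ^ k) atTop (nhds 1) := by
  have h_pow : Tendsto (fun k : ℕ => α ^ k) atTop atTop := tendsto_pow_atTop_atTop_of_one_lt hα
  have h_diff := (tendsto_nat_ceil_div_atTop.comp h_pow).sub h_pow.inv_tendsto_atTop
  rw [sub_zero] at h_diff
  refine h_diff.congr fun k => ?_
  rw [Nat.cast_sub (one_le_ceil_pow (zero_lt_one.trans hα) k), Nat.cast_one, sub_div, one_div]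
  rfl

theorem exists_tendsto_pow_le_lt_pow_succ (hα : 1 < α) :
    ∃ K : ℕ → ℕ, Tendsto K atTop atTop ∧ ∀ n, 1 ≤ n → α ^ K n ≤ n ∧ (n : ℝ) < α ^ (K n + 1) := by
  choose! K hK using fun (n : ℕ) (hn : 1 ≤ n) =>
    exists_nat_pow_near (Nat.one_le_cast (α := ℝ).2 hn) hα
  refine ⟨K, tendsto_atTop.2 fun k => ?_, hK⟩
  filter_upwards [eventually_ge_atTop 1, tendsto_natCast_atTop_atTop.eventually_ge_atTop (α ^ k)]
    with n hn hkn
  exact Nat.lt_succ_iff.1 ((pow_lt_pow_iff_right₀ hα).1 (hkn.trans_lt (hK n hn).2))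

theorem tendsto_div_zero_of_monotone_of_tendsto_ceil_pow {u : ℕ → ℝ} (hu : Monotone u)
    (hu_nonneg : 0 ≤ u 0) (hα : 1 < α)
    (h : Tendsto (fun k : ℕ => (α ^ k)⁻¹ * u (⌈α ^ k⌉₊ - 1)) atTop (nhds 0)) :
    Tendsto (fun n : ℕ => (n : ℝ)⁻¹ * u n) atTop (nhds 0) := by
  obtain ⟨K, hK_top, hK⟩ := exists_tendsto_pow_le_lt_pow_succ hα
  have nonneg (n : ℕ) : 0 ≤ u n := hu_nonneg.trans (hu n.zero_le)
  have hα_pos : 0 < α := zero_lt_one.trans hα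
  have h_bound := (((tendsto_add_atTop_iff_nat 1).2 h).comp hK_top).const_mul α
  rw [mul_zero] at h_bound
  refine squeeze_zero' (.of_forall fun n => mul_nonneg (by positivity) (nonneg n)) ?_ h_bound
  filter_upwards [eventually_ge_atTop 1] with n hn
  obtain ⟨hKn, hnK⟩ := hK n hn
  calc (n : ℝ)⁻¹ * u n
      ≤ (α ^ K n)⁻¹ * u (⌈α ^ (K n + 1)⌉₊ - 1) :=
        mul_le_mul (inv_anti₀ (pow_pos hα_pos _) hKn)
          (hu (Nat.le_sub_one_of_lt (Nat.lt_ceil.2 hnK))) (nonneg n) (by positivity)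
    _ = α * ((α ^ (K n + 1))⁻¹ * u (⌈α ^ (K n + 1)⌉₊ - 1)) := by
        rw [pow_succ]
        field_simp

theorem tendsto_block_avg_iff {E : Type*} [NormedAddCommGroup E] [NormedSpace ℝ E] {x : ℕ → E}
    {ℓ : E} (hα : 1 < α) :
    Tendsto (fun k : ℕ => (α ^ (k + 1) - α ^ k)⁻¹ •
        ∑ i ∈ Finset.Ico ⌈α ^ k⌉₊ ⌈α ^ (k + 1)⌉₊, x i) atTop (nhds ℓ) ↔
      Tendsto (fun k : ℕ => (α ^ k)⁻¹ • ∑ i ∈ Finset.Icc 1 (⌈α ^ k⌉₊ - 1), x i)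
        atTop (nhds ℓ) := by
  rw [← tendsto_inv_smul_sub_pow_iff hα]
  refine tendsto_congr fun k => ?_
  rw [sum_Ico_eq_sum_Icc_one_sub x (one_le_ceil_pow (zero_lt_one.trans hα) k)
    (Nat.ceil_mono (pow_le_pow_right₀ hα.le k.le_succ))]

theorem tendsto_block_avg_of_cesaro {E : Type*} [NormedAddCommGroup E] [NormedSpace ℝ E]
    {x : ℕ → E} {ℓ : E} (hα : 1 < α)
    (h : Tendsto (fun n : ℕ => (n : ℝ)⁻¹ • ∑ i ∈ Finset.Icc 1 n, x i) atTop (nhds ℓ)) :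
    Tendsto (fun k : ℕ => (α ^ (k + 1) - α ^ k)⁻¹ •
        ∑ i ∈ Finset.Ico ⌈α ^ k⌉₊ ⌈α ^ (k + 1)⌉₊, x i) atTop (nhds ℓ) :=
  (tendsto_block_avg_iff hα).2 (tendsto_inv_smul_comp_of_tendsto_div
    (a := fun n => ∑ i ∈ Finset.Icc 1 n, x i)
    (tendsto_ceil_pow_sub_one_atTop hα) (tendsto_ceil_pow_sub_one_div_pow hα) h)

theorem cesaro_of_tendsto_block_avg_of_ge {x : ℕ → ℝ} {ℓ : ℝ} (hα : 1 < α)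
    (hge : ∀ n : ℕ, 1 ≤ n → ℓ ≤ x n)
    (h : Tendsto (fun k : ℕ => (α ^ (k + 1) - α ^ k)⁻¹ *
        ∑ i ∈ Finset.Ico ⌈α ^ k⌉₊ ⌈α ^ (k + 1)⌉₊, x i) atTop (nhds ℓ)) :
    Tendsto (fun n : ℕ => (n : ℝ)⁻¹ * ∑ i ∈ Finset.Icc 1 n, x i) atTop (nhds ℓ) := by
  have h_div_self : Tendsto (fun n : ℕ => (n : ℝ) / n) atTop (nhds 1) := by
    refine tendsto_const_nhds.congr' ?_
    filter_upwards [eventually_ne_atTop 0] with n hn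
    exact (div_self (Nat.cast_ne_zero.2 hn)).symm
  have h_mono : Monotone fun n : ℕ => ∑ i ∈ Finset.Icc 1 n, (x i - ℓ) := fun _ _ hmn =>
    Finset.sum_le_sum_of_subset_of_nonneg (Finset.Icc_subset_Icc_right hmn) fun i hi _ =>
      sub_nonneg.2 (hge i (Finset.mem_Icc.1 hi).1)
  have h_pow : Tendsto (fun k : ℕ => (α ^ k)⁻¹ * ∑ i ∈ Finset.Icc 1 (⌈α ^ k⌉₊ - 1), (x i - ℓ))
      atTop (nhds 0) :=
    (tendsto_inv_smul_sum_sub_iff (tendsto_ceil_pow_sub_one_div_pow hα)).2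
      ((tendsto_block_avg_iff hα).1 h)
  exact (tendsto_inv_smul_sum_sub_iff h_div_self).1
    (tendsto_div_zero_of_monotone_of_tendsto_ceil_pow h_mono (by simp) hα h_pow)

end Powers

theorem cesaro_iff_exists_block_avg_of_ge_general (x : ℕ → ℝ) (ℓ : ℝ)
    (hge : ∀ n : ℕ, 1 ≤ n → ℓ ≤ x n) :
    Tendsto (fun n : ℕ => (1 / (n : ℝ)) * ∑ i ∈ Finset.Icc 1 n, x i) atTop (nhds ℓ) ↔
      ∃ α : ℝ, 1 < α ∧
        Tendsto (fun k : ℕ =>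
            (1 / (α ^ (k + 1) - α ^ k)) * ∑ i ∈ Finset.Ico ⌈α ^ k⌉₊ ⌈α ^ (k + 1)⌉₊, x i)
          atTop (nhds ℓ) := by
  simp only [one_div]
  constructor
  · intro h
    exact ⟨2, one_lt_two, tendsto_block_avg_of_cesaro one_lt_two h⟩
  · rintro ⟨α, hα, h⟩
    exact cesaro_of_tendsto_block_avg_of_ge hα hge h

/-- A bounded real sequence with `x n ≥ ℓ` for all `n ≥ 1` is Cesàro convergent to `ℓ` iff
for some `α > 1` the block averages over `[α^k, α^(k+1))` converge to `ℓ`. -/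
theorem cesaro_iff_exists_block_avg_of_ge (x : ℕ → ℝ) (ℓ : ℝ)
    (hbdd : ∃ C : ℝ, ∀ n : ℕ, 1 ≤ n → |x n| ≤ C)
    (hge : ∀ n : ℕ, 1 ≤ n → ℓ ≤ x n) :
    Tendsto (fun n : ℕ => (1 / (n : ℝ)) * ∑ i ∈ Finset.Icc 1 n, x i) atTop (nhds ℓ) ↔
      ∃ α : ℝ, 1 < α ∧
        Tendsto (fun k : ℕ =>
            (1 / (α ^ (k + 1) - α ^ k)) * ∑ i ∈ Finset.Ico ⌈α ^ k⌉₊ ⌈α ^ (k + 1)⌉₊, x i)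
          atTop (nhds ℓ) :=
  cesaro_iff_exists_block_avg_of_ge_general x ℓ hge
end

section
/- For s ∈ [0,1], define A_s := ⋃_{n≥1} { 2^n + ⌊s·2^{n−1}⌋ + t : t = 1, …, 2^{n−1} } ⊆ ℕ. Then for every s ∈ [0,1], the lower asymptotic density of A_s equals 1/(2+s), i.e., liminf_{n→∞} (1/n) · #(A_s ∩ [1, n]) = 1/(2+s). -/
open Filter

/-- The set `A_s = ⋃_{n ≥ 1} {2^n + ⌊s·2^(n-1)⌋ + t : t = 1, …, 2^(n-1)}`. -/
def blockSet (s : ℝ) : Set ℕ :=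
  {m : ℕ | ∃ n : ℕ, 1 ≤ n ∧ ∃ t : ℕ, 1 ≤ t ∧ t ≤ 2 ^ (n - 1) ∧
    m = 2 ^ n + ⌊s * (2 : ℝ) ^ (n - 1)⌋₊ + t}

/-!
The proportion of `A` in `[1, n]` increases while `n` runs through elements of `A` and decreases
while it runs through non-elements. When `A` is a union of successive blocks `(a k, b k]`, its lower
density is therefore the `liminf` of the proportions taken at the points `a k` alone. For `A_s`, the
earlier blocks contribute `1 + 2 + ⋯ + 2^(k-1) = 2^k - 1` elements at a point `a k ∼ (2 + s) 2^k`.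
-/

open Set Topology

theorem div_le_add_div_add {K : Type*} [Field K] [LinearOrder K] [IsStrictOrderedRing K]
    {x y t : K} (hy : 0 < y) (hxy : x ≤ y) (ht : 0 ≤ t) : x / y ≤ (x + t) / (y + t) := by
  rw [div_le_div_iff₀ hy (by positivity)]
  linarith [mul_le_mul_of_nonneg_right hxy ht]

theorem liminf_eq_liminf_comp_of_min_le {α β : Type*} [ConditionallyCompleteLinearOrder α]
    [LinearOrder β] [NoMaxOrder β] {f : β → α} {a : ℕ → β} (ha : Monotone a)
    (ha_top : Tendsto a atTop atTop)
    (hf_bdd : IsBoundedUnder (· ≥ ·) atTop f) (hf_cobdd : IsCoboundedUnder (· ≥ ·) atTop (f ∘ a))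
    (hf : ∀ k, ∀ n ∈ Ico (a k) (a (k + 1)), min (f (a k)) (f (a (k + 1))) ≤ f n) :
    liminf f atTop = liminf (f ∘ a) atTop := by
  refine le_antisymm (ha_top.liminf_le_liminf_comp hf_cobdd hf_bdd) ?_
  have hf_cobdd' : IsCoboundedUnder (· ≥ ·) atTop f := IsCobounded.mono (map_mono ha_top) hf_cobdd
  refine (le_liminf_iff hf_cobdd' hf_bdd).2 fun y hy ↦ ?_
  have hy_comp : ∀ᶠ k in atTop, y < f (a k) :=
    eventually_lt_of_lt_liminf hy (ha_top.isBoundedUnder_comp hf_bdd)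
  obtain ⟨K, hK⟩ := eventually_atTop.1 hy_comp
  have h_unbdd : ¬BddAbove (image a (Ici K)) := by
    rintro ⟨u, hu⟩
    obtain ⟨k, huk, hKk⟩ :=
      ((ha_top.eventually_gt_atTop u).and (eventually_ge_atTop K)).exists
    exact huk.not_ge (hu (mem_image_of_mem a hKk))
  have h_cover : ⋃ k ∈ Ici K, Ico (a k) (a (k + 1)) = Ici (a K) :=
    biUnion_Ici_Ico_map_succ (fun k hk ↦ ha hk) h_unbdd
  filter_upwards [Ici_mem_atTop (a K)] with n hn
  obtain ⟨k, hKk, hnk⟩ := mem_iUnion₂.1 (h_cover ▸ hn)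
  exact (lt_min (hK k hKk) (hK (k + 1) (hKk.trans k.le_succ))).trans_le (hf k n hnk)

section Density

/-- The counting function `n ↦ #(A ∩ [1, n])` of a set `A` of natural numbers. -/
noncomputable def countUpTo (A : Set ℕ) (n : ℕ) : ℕ := (A ∩ Icc 1 n).ncard

/-- The lower asymptotic density `d_*(A)` of a set `A` of natural numbers; the term `n = 0`, which
is `0 / 0 = 0`, does not influence the limit. -/
noncomputable def lowerDensity (A : Set ℕ) : ℝ :=
  liminf (fun n : ℕ ↦ (countUpTo A n : ℝ) / n) atTop

variable {A : Set ℕ} {m n : ℕ}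

theorem countUpTo_zero (A : Set ℕ) : countUpTo A 0 = 0 := by
  simp [countUpTo]

theorem countUpTo_le (A : Set ℕ) (n : ℕ) : countUpTo A n ≤ n := by
  simpa [countUpTo] using ncard_le_ncard (inter_subset_right (s := A)) (finite_Icc 1 n)

theorem countUpTo_add_ncard (A : Set ℕ) (hmn : m ≤ n) :
    countUpTo A m + (A ∩ Ioc m n).ncard = countUpTo A n := by
  have h_disj : Disjoint (Icc 1 m) (Ioc m n) :=
    disjoint_left.2 fun _ hx hx' ↦ hx.2.not_gt hx'.1
  have h_union : Icc 1 m ∪ Ioc m n = Icc 1 n := by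
    ext x
    simp only [mem_union, mem_Icc, mem_Ioc]
    omega
  rw [countUpTo, countUpTo, ← h_union, inter_union_distrib_left,
    ncard_union_eq (h_disj.mono inter_subset_right inter_subset_right)
      ((finite_Icc 1 m).inter_of_right A) ((finite_Ioc m n).inter_of_right A)]

theorem countUpTo_of_Ioc_subset (hmn : m ≤ n) (hA : Ioc m n ⊆ A) :
    countUpTo A n = countUpTo A m + (n - m) := by
  rw [← countUpTo_add_ncard A hmn, inter_eq_right.2 hA, ncard_Ioc_nat]

theorem countUpTo_of_disjoint_Ioc (hmn : m ≤ n) (hA : Disjoint A (Ioc m n)) :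
    countUpTo A n = countUpTo A m := by
  rw [← countUpTo_add_ncard A hmn, hA.inter_eq, ncard_empty, add_zero]

theorem countUpTo_div_le_one (A : Set ℕ) (n : ℕ) : (countUpTo A n : ℝ) / n ≤ 1 :=
  div_le_one_of_le₀ (mod_cast countUpTo_le A n) n.cast_nonneg

theorem countUpTo_div_le_of_Ioc_subset (hmn : m ≤ n) (hA : Ioc m n ⊆ A) :
    (countUpTo A m : ℝ) / m ≤ (countUpTo A n : ℝ) / n := by
  rcases m.eq_zero_or_pos with rfl | hm
  · rw [Nat.cast_zero, div_zero]
    positivity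
  · obtain ⟨t, rfl⟩ := Nat.exists_eq_add_of_le hmn
    rw [countUpTo_of_Ioc_subset hmn hA, Nat.add_sub_cancel_left, Nat.cast_add, Nat.cast_add]
    exact div_le_add_div_add (mod_cast hm) (mod_cast countUpTo_le A m) t.cast_nonneg

theorem countUpTo_div_le_of_disjoint_Ioc (hmn : m ≤ n) (hA : Disjoint A (Ioc m n)) :
    (countUpTo A n : ℝ) / n ≤ (countUpTo A m : ℝ) / m := by
  rw [countUpTo_of_disjoint_Ioc hmn hA]
  rcases m.eq_zero_or_pos with rfl | hm
  · simp [countUpTo_zero]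
  · gcongr

end Density

section Blocks

theorem monotone_and_monotone_of_interlacing {α : Type*} [Preorder α] {a b : ℕ → α}
    (hab : ∀ k, a k ≤ b k) (hba : ∀ k, b k ≤ a (k + 1)) : Monotone a ∧ Monotone b :=
  ⟨monotone_nat_of_le_succ fun k ↦ (hab k).trans (hba k),
    monotone_nat_of_le_succ fun k ↦ (hba k).trans (hab (k + 1))⟩

theorem disjoint_iUnion_Ioc_Ioc {α : Type*} [Preorder α] {a b : ℕ → α} (ha : Monotone a)
    (hb : Monotone b) (k : ℕ) : Disjoint (⋃ j, Ioc (a j) (b j)) (Ioc (b k) (a (k + 1))) := by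
  refine disjoint_iUnion_left.2 fun j ↦ disjoint_left.2 fun x hx hx' ↦ ?_
  rcases Nat.lt_or_ge k j with hkj | hjk
  · exact hx.1.not_ge (hx'.2.trans (ha hkj))
  · exact hx'.1.not_ge (hx.2.trans (hb hjk))

variable {a b : ℕ → ℕ}

theorem countUpTo_iUnion_Ioc_left (hab : ∀ k, a k ≤ b k) (hba : ∀ k, b k ≤ a (k + 1)) (k : ℕ) :
    countUpTo (⋃ j, Ioc (a j) (b j)) (a k) = ∑ j ∈ Finset.range k, (b j - a j) := by
  obtain ⟨ha, hb⟩ := monotone_and_monotone_of_interlacing hab hba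
  induction k with
  | zero =>
    have h_disj : Disjoint (⋃ j, Ioc (a j) (b j)) (Ioc 0 (a 0)) :=
      disjoint_iUnion_left.2 fun j ↦ disjoint_left.2 fun x hx hx' ↦
        hx.1.not_ge (hx'.2.trans (ha j.zero_le))
    rw [countUpTo_of_disjoint_Ioc (a 0).zero_le h_disj, countUpTo_zero, Finset.sum_range_zero]
  | succ k ih =>
    rw [countUpTo_of_disjoint_Ioc (hba k) (disjoint_iUnion_Ioc_Ioc ha hb k),
      countUpTo_of_Ioc_subset (hab k) (subset_iUnion (fun j ↦ Ioc (a j) (b j)) k), ih,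
      Finset.sum_range_succ]

theorem lowerDensity_iUnion_Ioc (hab : ∀ k, a k ≤ b k) (hba : ∀ k, b k ≤ a (k + 1))
    (ha_top : Tendsto a atTop atTop) :
    lowerDensity (⋃ k, Ioc (a k) (b k)) =
      liminf (fun k ↦ ((∑ j ∈ Finset.range k, (b j - a j) : ℕ) : ℝ) / a k) atTop := by
  obtain ⟨ha, hb⟩ := monotone_and_monotone_of_interlacing hab hba
  simp only [← countUpTo_iUnion_Ioc_left hab hba]
  set A := ⋃ k, Ioc (a k) (b k)
  refine liminf_eq_liminf_comp_of_min_le ha ha_top (isBoundedUnder_of ⟨0, fun n ↦ by positivity⟩)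
    (isCoboundedUnder_ge_of_le _ fun k ↦ countUpTo_div_le_one A (a k)) fun k n hn ↦ ?_
  rcases le_total n (b k) with hnb | hbn
  · refine min_le_of_left_le (countUpTo_div_le_of_Ioc_subset hn.1 ?_)
    exact (Ioc_subset_Ioc_right hnb).trans (subset_iUnion (fun j ↦ Ioc (a j) (b j)) k)
  · refine min_le_of_right_le (countUpTo_div_le_of_disjoint_Ioc hn.2.le ?_)
    exact (disjoint_iUnion_Ioc_Ioc ha hb k).mono_right (Ioc_subset_Ioc_left hbn)

end Blocks

section BlockSet

/-- The left end point of the block of `blockSet s` of length `2 ^ k`. The blocks are indexed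
from `k = 0`, so that this is `2 ^ n + ⌊s * 2 ^ (n - 1)⌋` for `n = k + 1`. -/
noncomputable def blockStart (s : ℝ) (k : ℕ) : ℕ := 2 ^ (k + 1) + ⌊s * (2 : ℝ) ^ k⌋₊

variable {s : ℝ}

theorem blockSet_eq_iUnion_Ioc (s : ℝ) :
    blockSet s = ⋃ k, Ioc (blockStart s k) (blockStart s k + 2 ^ k) := by
  ext m
  simp only [blockSet, blockStart, mem_ofPred_eq, mem_iUnion, mem_Ioc]
  constructor
  · rintro ⟨n, hn, t, ht_pos, ht_le, rfl⟩
    obtain ⟨k, rfl⟩ := Nat.exists_eq_add_of_le' hn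
    exact ⟨k, Nat.lt_add_of_pos_right ht_pos, Nat.add_le_add_left ht_le _⟩
  · rintro ⟨k, h_lt, h_le⟩
    obtain ⟨t, rfl⟩ := Nat.exists_eq_add_of_lt h_lt
    exact ⟨k + 1, k.succ_pos, t + 1, t.succ_pos, by rw [Nat.add_sub_cancel]; omega, rfl⟩

theorem blockStart_add_two_pow_le (hs : 0 ≤ s) (k : ℕ) :
    blockStart s k + 2 ^ k ≤ blockStart s (k + 1) := by
  have h_floor : ⌊s * (2 : ℝ) ^ k⌋₊ ≤ ⌊s * (2 : ℝ) ^ (k + 1)⌋₊ := by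
    gcongr <;> norm_num
  have h_pow : 2 ^ (k + 1) + 2 ^ k ≤ 2 ^ (k + 1 + 1) := by
    simp only [pow_succ]
    omega
  unfold blockStart
  omega

theorem strictMono_blockStart (hs : 0 ≤ s) : StrictMono (blockStart s) :=
  strictMono_nat_of_lt_succ fun k ↦
    (Nat.lt_add_of_pos_right (by positivity)).trans_le (blockStart_add_two_pow_le hs k)

theorem tendsto_blockStart_div_two_pow (hs : 0 ≤ s) :
    Tendsto (fun k ↦ (blockStart s k : ℝ) / 2 ^ k) atTop (𝓝 (2 + s)) := by
  have h_pow : Tendsto (fun k : ℕ ↦ (2 : ℝ) ^ k) atTop atTop :=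
    tendsto_pow_atTop_atTop_of_one_lt one_lt_two
  refine (((tendsto_nat_floor_mul_div_atTop hs).comp h_pow).const_add 2).congr fun k ↦ ?_
  simp only [Function.comp_apply, blockStart]
  push_cast
  rw [pow_succ]
  field_simp

theorem tendsto_two_pow_sub_one_div_blockStart (hs : 0 ≤ s) :
    Tendsto (fun k ↦ ((2 : ℝ) ^ k - 1) / blockStart s k) atTop (𝓝 (1 / (2 + s))) := by
  have h_num : Tendsto (fun k : ℕ ↦ 1 - (1 / 2 : ℝ) ^ k) atTop (𝓝 1) := by
    simpa using (tendsto_pow_atTop_nhds_zero_of_lt_one (r := (1 / 2 : ℝ)) (by norm_num)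
      (by norm_num)).const_sub 1
  refine (h_num.div (tendsto_blockStart_div_two_pow hs) (by positivity)).congr fun k ↦ ?_
  rw [Pi.div_apply, one_div_pow]
  field_simp

theorem blockSet_lower_density_general (hs : 0 ≤ s) :
    lowerDensity (blockSet s) = 1 / (2 + s) := by
  have h_sum (k : ℕ) : ((∑ j ∈ Finset.range k, 2 ^ j : ℕ) : ℝ) = 2 ^ k - 1 := by
    push_cast
    rw [geom_sum_eq (by norm_num)]
    norm_num
  rw [blockSet_eq_iUnion_Ioc, lowerDensity_iUnion_Ioc (fun k ↦ Nat.le_add_right _ _)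
    (blockStart_add_two_pow_le hs) (strictMono_blockStart hs).tendsto_atTop]
  simp only [Nat.add_sub_cancel_left, h_sum]
  exact (tendsto_two_pow_sub_one_div_blockStart hs).liminf_eq

end BlockSet

/-- For every `s ∈ [0,1]`, the lower asymptotic density of `A_s` equals `1/(2+s)`. -/
theorem blockSet_lower_density :
    ∀ s ∈ Set.Icc (0 : ℝ) 1,
      liminf (fun n : ℕ => (1 / (n : ℝ)) * Nat.card (blockSet s ∩ Set.Icc 1 n : Set ℕ)) atTop
        = 1 / (2 + s) := by
  intro s hs
  simpa only [one_div_mul_eq_div, Nat.card_coe_set_eq, lowerDensity, countUpTo] using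
    blockSet_lower_density_general hs.1
end

section
/- Let (x_n)_{n≥1} be a real sequence that is Cesàro convergent to 0, let α > 1, and for k ≥ 1 set ι_k := ⌈α^{k−1}⌉ and b_k := (1/#I_{α,k}) Σ_{i ∈ I_{α,k}} x_i, where I_{α,k} := [α^{k−1}, α^k) ∩ ℕ (with b_k := 0 when I_{α,k} is empty). Then for all sufficiently large k, (ι_{k+1} − ι_k)·b_k = (ι_{k+1} − 1)·a_{ι_{k+1}−1} − (ι_k − 1)·a_{ι_k−1}, where a_n := (1/n) Σ_{i=1}^{n} x_i, and consequently lim_{k→∞} b_k = 0. -/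
open Filter

/-! Multiplied by its length, the average over a block `[u, v)` is the difference of two initial
sums. If `x` has Cesàro limit `c`, the deviations of these sums from their `c`-multiples are
`o(v)`, which is negligible against the length `v - u` as soon as `v = O(v - u)`. For geometric
blocks `v - u` is asymptotic to `(1 - α⁻¹) v`, the ceilings contributing only `O(1)`. -/

section BlockAverage

open Asymptotics
open scoped Topology

variable {κ E : Type*} {F : Filter κ}

theorem isBigO_natCeil_sub_self {f : κ → ℝ} (hf : ∀ᶠ k in F, 0 ≤ f k) :
    (fun k => (⌈f k⌉₊ : ℝ) - f k) =O[F] (fun _ => (1 : ℝ)) :=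
  IsBigO.of_norm_eventuallyLE (hf.mono fun _ hk => Nat.abs_ceil_sub_le hk)

theorem isBigO_natCeil_sub_natCeil {f g : κ → ℝ}
    (hf : ∀ᶠ k in F, 0 ≤ f k) (hg : Tendsto g F atTop) (hgf : g =O[F] (fun k => g k - f k)) :
    (fun k => (⌈g k⌉₊ : ℝ)) =O[F] (fun k => (⌈g k⌉₊ : ℝ) - ⌈f k⌉₊) := by
  have hone : (fun _ => (1 : ℝ)) =o[F] g := (isLittleO_const_id_atTop 1).comp_tendsto hg
  have herror : (fun k => ((⌈g k⌉₊ : ℝ) - g k) - (⌈f k⌉₊ - f k)) =O[F] (fun _ => (1 : ℝ)) :=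
    (isBigO_natCeil_sub_self (hg.eventually_ge_atTop 0)).sub (isBigO_natCeil_sub_self hf)
  have hsub : (fun k => (⌈g k⌉₊ : ℝ) - ⌈f k⌉₊) ~[F] (fun k => g k - f k) :=
    ((herror.trans_isLittleO hone).trans_isBigO hgf).congr_left fun _ => sub_sub_sub_comm _ _ _ _
  have hceil : (fun k => (⌈g k⌉₊ : ℝ)) ~[F] g := isEquivalent_nat_ceil.comp_tendsto hg
  exact (hceil.isBigO.trans hgf).trans hsub.isBigO_symm

theorem isBigO_pow_sub_pow_pred {𝕜 : Type*} [NormedField 𝕜] {α : 𝕜} (hα : α ≠ 1) :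
    (fun k : ℕ => α ^ k) =O[atTop] (fun k : ℕ => α ^ k - α ^ (k - 1)) := by
  have hα0 : α - 1 ≠ 0 := sub_ne_zero.mpr hα
  refine (isBigO_const_mul_self (α / (α - 1)) _ _).congr' ?_ .rfl
  filter_upwards [eventually_ge_atTop 1] with k hk
  obtain ⟨n, rfl⟩ := Nat.exists_eq_add_of_le' hk
  simp only [Nat.add_sub_cancel]
  field_simp
  ring

section Module

variable [AddCommGroup E] [Module ℝ E]

/-- The average of a sequence `x` over the integer block `[m, n)`. It is `0` on an empty block, and
the Cesàro mean of `x 1, …, x n` is `blockAverage x 1 (n + 1)`. -/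
noncomputable def blockAverage (x : ℕ → E) (m n : ℕ) : E :=
  (1 / ((Finset.Ico m n).card : ℝ)) • ∑ i ∈ Finset.Ico m n, x i

theorem blockAverage_one_add_one (x : ℕ → E) (n : ℕ) :
    blockAverage x 1 (n + 1) = (1 / (n : ℝ)) • ∑ i ∈ Finset.Icc 1 n, x i := by
  rw [blockAverage, Nat.card_Ico, Nat.add_sub_cancel, Finset.Ico_add_one_right_eq_Icc]

theorem sub_smul_blockAverage (x : ℕ → E) {m n : ℕ} (hmn : m ≤ n) :
    ((n : ℝ) - m) • blockAverage x m n = ∑ i ∈ Finset.Ico m n, x i := by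
  rcases hmn.eq_or_lt with rfl | hlt
  · simp
  · have hlen : (n : ℝ) - m ≠ 0 := sub_ne_zero.mpr (by exact_mod_cast hlt.ne')
    rw [blockAverage, Nat.card_Ico, Nat.cast_sub hmn, one_div, smul_inv_smul₀ hlen]

theorem sub_smul_blockAverage_eq_sub (x : ℕ → E) {l m n : ℕ} (hlm : l ≤ m) (hmn : m ≤ n) :
    ((n : ℝ) - m) • blockAverage x m n =
      ((n : ℝ) - l) • blockAverage x l n - ((m : ℝ) - l) • blockAverage x l m := by
  rw [sub_smul_blockAverage x hmn, sub_smul_blockAverage x (hlm.trans hmn),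
    sub_smul_blockAverage x hlm, ← Finset.sum_Ico_consecutive x hlm hmn, add_sub_cancel_left]

theorem sub_smul_blockAverage_sub_eq_sub (x : ℕ → E) (c : E) {l m n : ℕ}
    (hlm : l ≤ m) (hmn : m ≤ n) :
    ((n : ℝ) - m) • (blockAverage x m n - c) =
      ((n : ℝ) - l) • (blockAverage x l n - c) - ((m : ℝ) - l) • (blockAverage x l m - c) := by
  rw [smul_sub, sub_smul_blockAverage_eq_sub x hlm hmn]
  module

end Module

section Convergence

variable [NormedAddCommGroup E] [NormedSpace ℝ E]

theorem isLittleO_sub_smul_blockAverage_sub {x : ℕ → E} {c : E} {l : ℕ}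
    (hx : Tendsto (blockAverage x l) atTop (𝓝 c)) :
    (fun n : ℕ => ((n : ℝ) - l) • (blockAverage x l n - c)) =o[atTop] (fun n : ℕ => (n : ℝ)) := by
  have hlen : (fun n : ℕ => (n : ℝ) - l) =O[atTop] (fun n : ℕ => (n : ℝ)) :=
    (isBigO_refl _ _).sub
      ((isLittleO_const_id_atTop _).comp_tendsto tendsto_natCast_atTop_atTop).isBigO
  have hdev : (fun n => blockAverage x l n - c) =o[atTop] (fun _ => (1 : ℝ)) :=
    (isLittleO_one_iff ℝ).mpr (tendsto_sub_nhds_zero_iff.mpr hx)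
  simpa using hlen.smul_isLittleO hdev

theorem tendsto_blockAverage_of_isBigO {x : ℕ → E} {c : E} {l : ℕ} {u v : κ → ℕ}
    (hx : Tendsto (blockAverage x l) atTop (𝓝 c))
    (hu : Tendsto u F atTop) (huv : ∀ᶠ k in F, u k ≤ v k)
    (hlen : (fun k => (v k : ℝ)) =O[F] (fun k => (v k : ℝ) - u k)) :
    Tendsto (fun k => blockAverage x (u k) (v k)) F (𝓝 c) := by
  have hv : Tendsto v F atTop := tendsto_atTop_mono' F huv hu
  have hu_le_v : (fun k => (u k : ℝ)) =O[F] (fun k => (v k : ℝ)) :=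
    IsBigO.of_norm_eventuallyLE (huv.mono fun k hk => by simpa using hk)
  have hdev := isLittleO_sub_smul_blockAverage_sub hx
  have hblock := ((hdev.comp_tendsto hv).sub
    ((hdev.comp_tendsto hu).trans_isBigO hu_le_v)).trans_isBigO hlen
  refine tendsto_sub_nhds_zero_iff.mp (hblock.tendsto_inv_smul_nhds_zero.congr' ?_)
  filter_upwards [huv, hu.eventually_ge_atTop l, hv.eventually_ne_atTop 0, hlen.eq_zero_imp]
    with k huvk hlu hv0 hlen0
  have hne : (v k : ℝ) - u k ≠ 0 := fun h => hv0 (by exact_mod_cast hlen0 h)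
  simp only [Function.comp_apply]
  rw [← sub_smul_blockAverage_sub_eq_sub x c hlu huvk, inv_smul_smul₀ hne]

theorem tendsto_blockAverage_natCeil_pow {x : ℕ → E} {c : E} {l : ℕ} {α : ℝ} (hα : 1 < α)
    (hx : Tendsto (blockAverage x l) atTop (𝓝 c)) :
    Tendsto (fun k => blockAverage x ⌈α ^ (k - 1)⌉₊ ⌈α ^ k⌉₊) atTop (𝓝 c) := by
  have hpow : Tendsto (fun k : ℕ => α ^ k) atTop atTop := tendsto_pow_atTop_atTop_of_one_lt hα
  have hpred : Tendsto (fun k : ℕ => α ^ (k - 1)) atTop atTop :=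
    hpow.comp (tendsto_sub_atTop_nat 1)
  have hceil_le (k : ℕ) : ⌈α ^ (k - 1)⌉₊ ≤ ⌈α ^ k⌉₊ :=
    Nat.ceil_mono (pow_le_pow_right₀ hα.le (Nat.sub_le k 1))
  exact tendsto_blockAverage_of_isBigO hx (tendsto_nat_ceil_atTop.comp hpred)
    (.of_forall hceil_le) (isBigO_natCeil_sub_natCeil (hpred.eventually_ge_atTop 0) hpow
      (isBigO_pow_sub_pow_pred hα.ne'))

end Convergence

theorem block_avg_identity_and_tendsto_zero_general [NormedAddCommGroup E] [NormedSpace ℝ E]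
    (x : ℕ → E) (c : E) (α : ℝ) (hα : 1 < α) (a b : ℕ → E) (ι : ℕ → ℕ)
    (ha : ∀ n : ℕ, a n = (1 / (n : ℝ)) • ∑ i ∈ Finset.Icc 1 n, x i)
    (hι : ∀ k : ℕ, ι k = ⌈α ^ (k - 1)⌉₊)
    (hb : ∀ k : ℕ, b k =
      (1 / ((Finset.Ico ⌈α ^ (k - 1)⌉₊ ⌈α ^ k⌉₊).card : ℝ)) •
        ∑ i ∈ Finset.Ico ⌈α ^ (k - 1)⌉₊ ⌈α ^ k⌉₊, x i)
    (hcesaro : Tendsto a atTop (𝓝 c)) :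
    (∀ k : ℕ, ((ι (k + 1) : ℝ) - (ι k : ℝ)) • b k =
        ((ι (k + 1) : ℝ) - 1) • a (ι (k + 1) - 1) - ((ι k : ℝ) - 1) • a (ι k - 1)) ∧
      Tendsto b atTop (𝓝 c) := by
  have ha_block (n : ℕ) : a n = blockAverage x 1 (n + 1) :=
    (ha n).trans (blockAverage_one_add_one x n).symm
  have hι_succ (k : ℕ) : ι (k + 1) = ⌈α ^ k⌉₊ := by rw [hι, Nat.add_sub_cancel]
  have hb_block (k : ℕ) : b k = blockAverage x (ι k) (ι (k + 1)) := by
    rw [hb, hι, hι_succ, blockAverage]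
  have hι_pos (k : ℕ) : 1 ≤ ι k := hι k ▸ Nat.one_le_ceil_iff.mpr (by positivity)
  have hι_le_succ (k : ℕ) : ι k ≤ ι (k + 1) := by
    rw [hι, hι_succ]
    exact Nat.ceil_mono (pow_le_pow_right₀ hα.le (Nat.sub_le k 1))
  constructor
  · intro k
    rw [hb_block, ha_block, ha_block, Nat.sub_add_cancel (hι_pos _), Nat.sub_add_cancel (hι_pos _)]
    exact_mod_cast sub_smul_blockAverage_eq_sub x (hι_pos k) (hι_le_succ k)
  · have hx : Tendsto (blockAverage x 1) atTop (𝓝 c) :=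
      (tendsto_add_atTop_iff_nat 1).mp (hcesaro.congr ha_block)
    exact (tendsto_blockAverage_natCeil_pow hα hx).congr fun k => (hb k).symm

end BlockAverage

/-- If `x` is Cesàro convergent to `0` and `α > 1`, then with `ι k = ⌈α^(k-1)⌉`,
`a n = (1/n) ∑_{i=1}^n x i` and `b k` the average of `x` over `I_{α,k} = [α^(k-1), α^k) ∩ ℕ`
(set to `0` when the block is empty), we have, for all sufficiently large `k`,
`(ι (k+1) - ι k) · b k = (ι (k+1) - 1) · a (ι (k+1) - 1) - (ι k - 1) · a (ι k - 1)`,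
and consequently `b k → 0`. -/
theorem block_avg_identity_and_tendsto_zero (x : ℕ → ℝ) (α : ℝ) (hα : 1 < α)
    (a b : ℕ → ℝ) (ι : ℕ → ℕ)
    (ha : ∀ n : ℕ, a n = (1 / (n : ℝ)) * ∑ i ∈ Finset.Icc 1 n, x i)
    (hι : ∀ k : ℕ, ι k = ⌈α ^ (k - 1)⌉₊)
    (hb : ∀ k : ℕ, b k =
      (1 / ((Finset.Ico ⌈α ^ (k - 1)⌉₊ ⌈α ^ k⌉₊).card : ℝ)) *
        ∑ i ∈ Finset.Ico ⌈α ^ (k - 1)⌉₊ ⌈α ^ k⌉₊, x i)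
    (hcesaro : Tendsto a atTop (nhds 0)) :
    (∃ K : ℕ, ∀ k : ℕ, K ≤ k →
        ((ι (k + 1) : ℝ) - (ι k : ℝ)) * b k =
          ((ι (k + 1) : ℝ) - 1) * a (ι (k + 1) - 1) - ((ι k : ℝ) - 1) * a (ι k - 1)) ∧
      Tendsto b atTop (nhds 0) := by
  obtain ⟨hidentity, hlim⟩ :=
    block_avg_identity_and_tendsto_zero_general x 0 α hα a b ι ha hι hb hcesaro
  exact ⟨⟨0, fun k _ => hidentity k⟩, hlim⟩
end
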